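/- Let M>0. There exist constants C>0 and A₀≥4 such that: for all A≥A₀, all R≥1, all L with 0<L≤A^{-3/2}, and all u∈H¹(S_R;ℂ) satisfying ‖u‖_∞ ≤ 1 and ∫_{S_R}|u|² dx ≤ M L^{-2/3} R, one has ∫_{S_R∩{|x₂|≥A}} ( |(∇−iA_van)u|² − L^{-2/3}|u|² + (L^{-2/3}/2)|u|⁴ ) dx ≥ 2 R L^{-4/3} ∫₀¹ g(b) db − C R L^{-1}. -/

import Mathlib

open MeasureTheory Real Set Filter Topology

noncomputable section

/-- The open square `Q_r = (-r/2, r/2) × (-r/2, r/2)`. -/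
def Qsq (r : ℝ) : Set (ℝ × ℝ) := Ioo (-r/2) (r/2) ×ˢ Ioo (-r/2) (r/2)

/-- The vertical strip `S_R = (-R/2, R/2) × ℝ`. -/
def Strip (R : ℝ) : Set (ℝ × ℝ) := Ioo (-R/2) (R/2) ×ˢ (univ : Set ℝ)

/-- The magnetic potential `A₀(x) = (-x₂/2, x₁/2)` of the constant unit magnetic field. -/
def A₀ (x : ℝ × ℝ) : ℝ × ℝ := (-x.2 / 2, x.1 / 2)

/-- The magnetic potential `A_van(x) = (-x₂²/2, 0)` generating the field `B(x) = x₂`. -/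
def Avan (x : ℝ × ℝ) : ℝ × ℝ := (-x.2 ^ 2 / 2, 0)

/-- The magnetic gradient energy density `|(∇ - iA)u|²` at `x`. -/
def magGradSq (A : ℝ × ℝ → ℝ × ℝ) (u : ℝ × ℝ → ℂ) (x : ℝ × ℝ) : ℝ :=
  ‖fderiv ℝ u x (1, 0) - Complex.I * ((A x).1 : ℂ) * u x‖ ^ 2 +
  ‖fderiv ℝ u x (0, 1) - Complex.I * ((A x).2 : ℂ) * u x‖ ^ 2

/-- The Ginzburg–Landau functional `F_{b,Q_r}` on the square `Q_r`. -/
def Fsq (b r : ℝ) (u : ℝ × ℝ → ℂ) : ℝ :=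
  ∫ x in Qsq r, (b * magGradSq A₀ u x - ‖u x‖ ^ 2 + ‖u x‖ ^ 4 / 2)

/-- (Smooth surrogate of) membership in `H¹(Q_r; ℂ)`. -/
def MemH1sq (u : ℝ × ℝ → ℂ) : Prop := ContDiff ℝ 1 u

/-- (Smooth surrogate of) membership in `H¹₀(Q_r; ℂ)`: vanishing on the boundary. -/
def MemH10sq (r : ℝ) (u : ℝ × ℝ → ℂ) : Prop :=
  ContDiff ℝ 1 u ∧ ∀ x ∈ frontier (Qsq r), u x = 0

/-- The Dirichlet ground-state energy `e_D(b, r)`. -/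
def eD (b r : ℝ) : ℝ := sInf (Fsq b r '' {u | MemH10sq r u})

/-- The Neumann ground-state energy `e_N(b, r)`. -/
def eN (b r : ℝ) : ℝ := sInf (Fsq b r '' {u | MemH1sq u})

/-- The energy density of the strip functional `𝓔_{L,R}` at `x`. -/
def stripDensity (L : ℝ) (u : ℝ × ℝ → ℂ) (x : ℝ × ℝ) : ℝ :=
  magGradSq Avan u x - L ^ (-(2:ℝ)/3) * ‖u x‖ ^ 2 + (L ^ (-(2:ℝ)/3) / 2) * ‖u x‖ ^ 4

/-- The strip functional `𝓔_{L,R}`. -/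
def Estrip (L R : ℝ) (u : ℝ × ℝ → ℂ) : ℝ := ∫ x in Strip R, stripDensity L u x

/-- (Surrogate of) membership in the space `H¹_{mag,0}(S_R)`. -/
def MemH1mag0 (R : ℝ) (u : ℝ × ℝ → ℂ) : Prop :=
  ContDiff ℝ 1 u ∧
  IntegrableOn (fun x => ‖u x‖ ^ 2) (Strip R) ∧
  IntegrableOn (magGradSq Avan u) (Strip R) ∧
  IntegrableOn (fun x => ‖u x‖ ^ 4) (Strip R) ∧
  ∀ x ∈ frontier (Strip R), u x = 0

/-- The ground-state energy `e_gs(L; R)` of the strip functional. -/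
def egs (L R : ℝ) : ℝ := sInf (Estrip L R '' {u | MemH1mag0 R u})

/-- `g : (0,∞) → ℝ` is the thermodynamic limit of the Dirichlet square energies. -/
def IsLimitG (g : ℝ → ℝ) : Prop :=
  ∀ b > 0, Tendsto (fun r => eD b r / r ^ 2) atTop (nhds (g b))

/-- `E : (0,∞) → ℝ` is the large-`R` limit of the strip energies. -/
def IsLimitE (E : ℝ → ℝ) : Prop :=
  ∀ L > 0, Tendsto (fun R => egs L R / R) atTop (nhds (E L))

/-!
Put `lam = L ^ (-2/3)`, so that the error `L⁻¹` is `lam * √lam`, and cut the region `|x₂| ≥ A` into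
unit-size cells, of which a half-strip of width `R` has about `R` per unit of height. In a cell at
height `h` the field is `h` up to `O(1)`.

Where `h < 102 * lam`, localise `u` to the cell by cut-offs varying on the scale `lam ^ (-1/2)`;
this costs `O(√lam)` per cell. So does replacing the field by the constant `h`, which changes a
suitable potential only by a bounded amount. With constant field `h`, a function supported in a
square has energy at least `lam * g (h / lam)` per unit area, because magnetic translates of it tile
arbitrarily large squares. Since `g` is monotone, the sum over the rows is at least
`lam ^ 2 * ∫ g` per unit of width, and the errors add up to `O(R * lam * √lam)`.

Where `h ≥ 102 * lam`, cutting off would cost infinitely much in total. There the magnetic Neumann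
energy of the cell alone already exceeds `lam * ‖u‖²`, so that the cell has nonnegative energy: the
gauge-invariant difference of `u` around a small loop detects the flux through it.
-/

/-! ### Energy densities -/

/-- The Ginzburg–Landau energy density with magnetic potential `A` and coupling `lam`: the common
form of the densities of the square functional and of the strip functional. -/
def glDensity (A : ℝ × ℝ → ℝ × ℝ) (lam : ℝ) (u : ℝ × ℝ → ℂ) (x : ℝ × ℝ) : ℝ :=
  magGradSq A u x - lam * ‖u x‖ ^ 2 + lam / 2 * ‖u x‖ ^ 4

/-- The covariant derivative `(∇ - iA)u · e` of `u` at `x` in the direction `e`. -/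
def covDeriv (A : ℝ × ℝ → ℝ × ℝ) (u : ℝ × ℝ → ℂ) (x e : ℝ × ℝ) : ℂ :=
  fderiv ℝ u x e - Complex.I * ((A x).1 * e.1 + (A x).2 * e.2) * u x

/-- The open square with lower left corner `(a, c)` and side length `l`. -/
def cell (a c l : ℝ) : Set (ℝ × ℝ) := Ioo a (a + l) ×ˢ Ioo c (c + l)

section Density

variable {A : ℝ × ℝ → ℝ × ℝ} {lam : ℝ} {u v : ℝ × ℝ → ℂ} {x : ℝ × ℝ}

lemma magGradSq_eq_covDeriv (A : ℝ × ℝ → ℝ × ℝ) (u : ℝ × ℝ → ℂ) (x : ℝ × ℝ) :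
    magGradSq A u x = ‖covDeriv A u x (1, 0)‖ ^ 2 + ‖covDeriv A u x (0, 1)‖ ^ 2 := by
  simp [magGradSq, covDeriv]

lemma magGradSq_nonneg (A : ℝ × ℝ → ℝ × ℝ) (u : ℝ × ℝ → ℂ) (x : ℝ × ℝ) :
    0 ≤ magGradSq A u x := by
  unfold magGradSq; positivity

lemma continuous_magGradSq (hA : Continuous A) (hu : ContDiff ℝ 1 u) :
    Continuous (magGradSq A u) := by
  have := hu.continuous
  unfold magGradSq
  fun_prop (disch := simp)

lemma continuous_glDensity (hA : Continuous A) (lam : ℝ) (hu : ContDiff ℝ 1 u) :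
    Continuous (glDensity A lam u) := by
  have h₁ := continuous_magGradSq hA hu
  have h₂ := hu.continuous
  unfold glDensity
  fun_prop

lemma continuous_A₀ : Continuous A₀ := by unfold A₀; fun_prop

lemma continuous_Avan : Continuous Avan := by unfold Avan; fun_prop

lemma magGradSq_congr_of_eventuallyEq (A : ℝ × ℝ → ℝ × ℝ) (h : u =ᶠ[𝓝 x] v) :
    magGradSq A u x = magGradSq A v x := by
  simp only [magGradSq, h.fderiv_eq, h.eq_of_nhds]

lemma glDensity_congr_of_eventuallyEq (A : ℝ × ℝ → ℝ × ℝ) (lam : ℝ) (h : u =ᶠ[𝓝 x] v) :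
    glDensity A lam u x = glDensity A lam v x := by
  simp only [glDensity, magGradSq_congr_of_eventuallyEq A h, h.eq_of_nhds]

lemma magGradSq_eq_zero_of_notMem_tsupport (hx : x ∉ tsupport u) : magGradSq A u x = 0 := by
  rw [magGradSq_congr_of_eventuallyEq A (notMem_tsupport_iff_eventuallyEq.1 hx)]
  simp [magGradSq]

lemma glDensity_eq_zero_of_notMem_tsupport (hx : x ∉ tsupport u) : glDensity A lam u x = 0 := by
  simp [glDensity, magGradSq_eq_zero_of_notMem_tsupport hx, image_eq_zero_of_notMem_tsupport hx]

lemma setIntegral_glDensity_eq_integral {s : Set (ℝ × ℝ)} (hs : tsupport u ⊆ s) :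
    ∫ x in s, glDensity A lam u x = ∫ x, glDensity A lam u x :=
  setIntegral_eq_integral_of_forall_compl_eq_zero fun _ hx =>
    glDensity_eq_zero_of_notMem_tsupport fun h => hx (hs h)

lemma hasCompactSupport_magGradSq (A : ℝ × ℝ → ℝ × ℝ) (hu : HasCompactSupport u) :
    HasCompactSupport (magGradSq A u) :=
  HasCompactSupport.intro hu fun _ => magGradSq_eq_zero_of_notMem_tsupport

lemma integrable_magGradSq (hA : Continuous A) (hu : ContDiff ℝ 1 u) (hc : HasCompactSupport u) :
    Integrable (magGradSq A u) :=
  (continuous_magGradSq hA hu).integrable_of_hasCompactSupport (hasCompactSupport_magGradSq A hc)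

lemma integrable_glDensity (hA : Continuous A) (lam : ℝ) (hu : ContDiff ℝ 1 u)
    (hc : HasCompactSupport u) : Integrable (glDensity A lam u) :=
  (continuous_glDensity hA lam hu).integrable_of_hasCompactSupport <|
    HasCompactSupport.intro hc fun _ => glDensity_eq_zero_of_notMem_tsupport

lemma neg_half_mul_le_glDensity (A : ℝ × ℝ → ℝ × ℝ) (hlam : 0 ≤ lam) (u : ℝ × ℝ → ℂ)
    (x : ℝ × ℝ) : -(lam / 2) ≤ glDensity A lam u x := by
  have h := magGradSq_nonneg A u x
  unfold glDensity
  nlinarith [mul_nonneg hlam (sq_nonneg (‖u x‖ ^ 2 - 1))]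

end Density

lemma isOpen_cell (a c l : ℝ) : IsOpen (cell a c l) := isOpen_Ioo.prod isOpen_Ioo

lemma measurableSet_cell (a c l : ℝ) : MeasurableSet (cell a c l) :=
  (isOpen_cell a c l).measurableSet

lemma Qsq_eq_cell (r : ℝ) : Qsq r = cell (-r / 2) (-r / 2) r := by
  unfold Qsq cell
  ring_nf

lemma cell_subset_Icc (a c l : ℝ) : cell a c l ⊆ Icc (a, c) (a + l, c + l) := by
  rw [← Icc_prod_Icc]
  exact prod_mono Ioo_subset_Icc_self Ioo_subset_Icc_self

lemma volume_real_cell {l : ℝ} (a c : ℝ) (hl : 0 ≤ l) : volume.real (cell a c l) = l ^ 2 := by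
  rw [cell, Measure.volume_eq_prod, measureReal_prod_prod]
  simp [hl, sq]

lemma volume_cell_ne_top (a c l : ℝ) : volume (cell a c l) ≠ ⊤ :=
  measure_ne_top_of_subset (cell_subset_Icc a c l) isCompact_Icc.measure_ne_top

lemma integrableOn_cell {f : ℝ × ℝ → ℝ} (hf : Continuous f) (a c l : ℝ) :
    IntegrableOn f (cell a c l) :=
  (hf.continuousOn.integrableOn_compact isCompact_Icc).mono_set (cell_subset_Icc a c l)

lemma hasCompactSupport_of_tsupport_subset_cell {u : ℝ × ℝ → ℂ} {a c l : ℝ}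
    (hu : tsupport u ⊆ cell a c l) : HasCompactSupport u :=
  HasCompactSupport.intro isCompact_Icc fun _ hx =>
    image_eq_zero_of_notMem_tsupport fun h => hx (cell_subset_Icc a c l (hu h))

/-! ### Localisation to a cell -/

section Cutoff

variable {A : ℝ × ℝ → ℝ × ℝ} {u : ℝ × ℝ → ℂ} {x : ℝ × ℝ} {a c l δ lam : ℝ}

lemma covDeriv_ofReal_mul {χ : ℝ × ℝ → ℝ} (hχ : DifferentiableAt ℝ χ x)
    (hu : DifferentiableAt ℝ u x) (e : ℝ × ℝ) :
    covDeriv A (fun y => (χ y : ℂ) * u y) x e =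
      χ x * covDeriv A u x e + (fderiv ℝ χ x e : ℂ) * u x := by
  have hχ' : HasFDerivAt (fun y => (χ y : ℂ)) (Complex.ofRealCLM.comp (fderiv ℝ χ x)) x :=
    Complex.ofRealCLM.hasFDerivAt.comp x hχ.hasFDerivAt
  unfold covDeriv
  rw [(hχ'.fun_mul hu.hasFDerivAt).fderiv]
  simp only [add_apply, smul_apply, smul_eq_mul,
    ContinuousLinearMap.comp_apply, Complex.ofRealCLM_apply]
  ring

lemma norm_sin_mul_add_cos_mul_sq_le (θ t : ℝ) (z w : ℂ) :
    ‖(sin θ : ℂ) * z + (cos θ * t : ℝ) * w‖ ^ 2 ≤ ‖z‖ ^ 2 + t ^ 2 * ‖w‖ ^ 2 := by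
  have htri : ‖(sin θ : ℂ) * z + (cos θ * t : ℝ) * w‖ ≤
      |sin θ| * ‖z‖ + |cos θ| * (|t| * ‖w‖) := by
    refine (norm_add_le _ _).trans_eq ?_
    rw [norm_mul, norm_mul, Complex.norm_real, Complex.norm_real, norm_eq_abs, norm_eq_abs,
      abs_mul, mul_assoc]
  calc _ ≤ (|sin θ| * ‖z‖ + |cos θ| * (|t| * ‖w‖)) ^ 2 := by gcongr
    _ ≤ (|sin θ| ^ 2 + |cos θ| ^ 2) * (‖z‖ ^ 2 + (|t| * ‖w‖) ^ 2) := by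
      nlinarith [sq_nonneg (|sin θ| * (|t| * ‖w‖) - |cos θ| * ‖z‖)]
    _ = ‖z‖ ^ 2 + t ^ 2 * ‖w‖ ^ 2 := by
      rw [sq_abs, sq_abs, sin_sq_add_cos_sq, one_mul, mul_pow, sq_abs]

-- Writing the cutoff as `sin θ` makes this a pointwise bound: the cross term is absorbed by
-- `sin² + cos² = 1`, so no integration by parts and no second derivative of the cutoff is needed.
lemma magGradSq_sin_mul_le {θ : ℝ × ℝ → ℝ} (hθ : DifferentiableAt ℝ θ x)
    (hu : DifferentiableAt ℝ u x) :
    magGradSq A (fun y => (sin (θ y) : ℂ) * u y) x ≤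
      magGradSq A u x + (fderiv ℝ θ x (1, 0) ^ 2 + fderiv ℝ θ x (0, 1) ^ 2) * ‖u x‖ ^ 2 := by
  have hdir (e : ℝ × ℝ) : ‖covDeriv A (fun y => (sin (θ y) : ℂ) * u y) x e‖ ^ 2 ≤
      ‖covDeriv A u x e‖ ^ 2 + fderiv ℝ θ x e ^ 2 * ‖u x‖ ^ 2 := by
    rw [covDeriv_ofReal_mul hθ.sin hu, fderiv_sin hθ]
    exact norm_sin_mul_add_cos_mul_sq_le _ _ _ _
  rw [magGradSq_eq_covDeriv, magGradSq_eq_covDeriv]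
  linarith [hdir (1, 0), hdir (0, 1)]

lemma exists_abs_deriv_smoothTransition_le : ∃ K, ∀ t, |deriv smoothTransition t| ≤ K := by
  have hcont : Continuous (deriv smoothTransition) :=
    smoothTransition.contDiff (n := 1).continuous_deriv le_rfl
  refine hcont.bounded_above_of_compact_support <|
    HasCompactSupport.intro (isCompact_Icc (a := 0) (b := 1)) fun t ht => ?_
  rw [mem_Icc, not_and_or, not_le, not_le] at ht
  rcases ht with ht | ht
  · have : smoothTransition =ᶠ[𝓝 t] fun _ => 0 := by
      filter_upwards [gt_mem_nhds ht] with s hs using smoothTransition.zero_of_nonpos hs.le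
    rw [this.deriv_eq, deriv_const]
  · have : smoothTransition =ᶠ[𝓝 t] fun _ => 1 := by
      filter_upwards [lt_mem_nhds ht] with s hs using smoothTransition.one_of_one_le hs.le
    rw [this.deriv_eq, deriv_const]

/-- A smooth plateau function on the line, with values in `[0, 1]`: it is `1` on `[δ, l - δ]`, it
vanishes outside `(δ/2, l - δ/2)`, and its derivative is of order `δ⁻¹`. -/
def plateau (l δ t : ℝ) : ℝ :=
  smoothTransition (2 / δ * t - 1) * smoothTransition (2 / δ * (l - t) - 1)

lemma contDiff_plateau (l δ : ℝ) : ContDiff ℝ 1 (plateau l δ) := by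
  have := smoothTransition.contDiff (n := 1)
  unfold plateau
  fun_prop

lemma plateau_nonneg (l δ t : ℝ) : 0 ≤ plateau l δ t :=
  mul_nonneg (smoothTransition.nonneg _) (smoothTransition.nonneg _)

lemma plateau_le_one (l δ t : ℝ) : plateau l δ t ≤ 1 :=
  mul_le_one₀ (smoothTransition.le_one _) (smoothTransition.nonneg _) (smoothTransition.le_one _)

lemma plateau_eq_one {t : ℝ} (hδ : 0 < δ) (h₁ : δ ≤ t) (h₂ : t ≤ l - δ) : plateau l δ t = 1 := by
  have hone {s : ℝ} (hs : δ ≤ s) : smoothTransition (2 / δ * s - 1) = 1 := by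
    refine smoothTransition.one_of_one_le ?_
    have : 2 / δ * δ ≤ 2 / δ * s := by gcongr
    rw [div_mul_cancel₀ _ hδ.ne'] at this
    linarith
  rw [plateau, hone h₁, hone (le_sub_comm.1 h₂), one_mul]

lemma mem_Icc_of_plateau_ne_zero {t : ℝ} (hδ : 0 < δ) (ht : plateau l δ t ≠ 0) :
    t ∈ Icc (δ / 2) (l - δ / 2) := by
  have hpos {s : ℝ} (hs : smoothTransition (2 / δ * s - 1) ≠ 0) : δ / 2 ≤ s := by
    contrapose! hs
    refine smoothTransition.zero_of_nonpos ?_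
    have : 2 / δ * s ≤ 2 / δ * (δ / 2) := by gcongr
    field_simp at this ⊢
    linarith
  exact ⟨hpos (left_ne_zero_of_mul ht), le_sub_comm.1 (hpos (right_ne_zero_of_mul ht))⟩

lemma exists_abs_deriv_plateau_le :
    ∃ K > 0, ∀ l δ t, 0 < δ → |deriv (plateau l δ) t| ≤ K / δ := by
  obtain ⟨K, hK⟩ := exists_abs_deriv_smoothTransition_le
  have hK0 : 0 ≤ K := (abs_nonneg _).trans (hK 0)
  refine ⟨4 * K + 1, by positivity, fun l δ t hδ => ?_⟩
  have hd (s : ℝ) : HasDerivAt smoothTransition (deriv smoothTransition s) s :=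
    (smoothTransition.contDiff (n := 1).differentiable one_ne_zero s).hasDerivAt
  have h₁ : HasDerivAt (fun t => 2 / δ * t - 1) (2 / δ) t := by
    simpa using ((hasDerivAt_id t).const_mul (2 / δ)).sub_const 1
  have h₂ : HasDerivAt (fun t => 2 / δ * (l - t) - 1) (-(2 / δ)) t := by
    simpa using (((hasDerivAt_id t).const_sub l).const_mul (2 / δ)).sub_const 1
  have hderiv : HasDerivAt (plateau l δ)
      (deriv smoothTransition (2 / δ * t - 1) * (2 / δ) * smoothTransition (2 / δ * (l - t) - 1) +
        smoothTransition (2 / δ * t - 1) *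
          (deriv smoothTransition (2 / δ * (l - t) - 1) * -(2 / δ))) t :=
    ((hd _).comp t h₁).mul ((hd _).comp t h₂)
  have hterm (s r : ℝ) : |deriv smoothTransition s| * smoothTransition r ≤ K :=
    (mul_le_mul (hK s) (smoothTransition.le_one r) (smoothTransition.nonneg r) hK0).trans_eq
      (mul_one K)
  rw [hderiv.deriv]
  refine (abs_add_le _ _).trans ?_
  simp only [abs_mul, abs_neg, abs_of_pos (div_pos two_pos hδ),
    abs_of_nonneg (smoothTransition.nonneg _)]
  calc _ = (|deriv smoothTransition (2 / δ * t - 1)| * smoothTransition (2 / δ * (l - t) - 1) +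
          |deriv smoothTransition (2 / δ * (l - t) - 1)| * smoothTransition (2 / δ * t - 1)) *
          (2 / δ) := by ring
    _ ≤ (K + K) * (2 / δ) := by gcongr <;> exact hterm _ _
    _ ≤ (4 * K + 1) / δ := by rw [mul_div_assoc']; gcongr; linarith

/-- The angle `θ` of the cutoff `sin θ` of `cell a c l`: equal to `π / 2` at distance at least `δ`
from the boundary, and to `0` near the boundary. -/
def cutoffAngle (a c l δ : ℝ) (x : ℝ × ℝ) : ℝ :=
  π / 2 * (plateau l δ (x.1 - a) * plateau l δ (x.2 - c))

/-- The function `u` cut off at distance `δ` from the boundary of `cell a c l`. -/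
def localize (a c l δ : ℝ) (u : ℝ × ℝ → ℂ) (x : ℝ × ℝ) : ℂ :=
  (sin (cutoffAngle a c l δ x) : ℂ) * u x

lemma contDiff_cutoffAngle (a c l δ : ℝ) : ContDiff ℝ 1 (cutoffAngle a c l δ) := by
  have := contDiff_plateau l δ
  unfold cutoffAngle
  fun_prop

lemma contDiff_localize (a c l δ : ℝ) (hu : ContDiff ℝ 1 u) :
    ContDiff ℝ 1 (localize a c l δ u) :=
  (Complex.ofRealCLM.contDiff.comp (contDiff_cutoffAngle a c l δ).sin).mul hu

lemma norm_localize_le (a c l δ : ℝ) (u : ℝ × ℝ → ℂ) (x : ℝ × ℝ) :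
    ‖localize a c l δ u x‖ ≤ ‖u x‖ := by
  rw [localize, norm_mul, Complex.norm_real]
  exact mul_le_of_le_one_left (norm_nonneg _) (abs_sin_le_one _)

lemma tsupport_localize_subset (a c l : ℝ) (hδ : 0 < δ) (u : ℝ × ℝ → ℂ) :
    tsupport (localize a c l δ u) ⊆ cell a c l := by
  have hclosed : tsupport (localize a c l δ u) ⊆
      Icc (a + δ / 2) (a + l - δ / 2) ×ˢ Icc (c + δ / 2) (c + l - δ / 2) := by
    refine closure_minimal (fun x hx => ?_) (isClosed_Icc.prod isClosed_Icc)
    have hplateau : plateau l δ (x.1 - a) * plateau l δ (x.2 - c) ≠ 0 := fun h => by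
      simp [localize, cutoffAngle, h] at hx
    have h₁ := mem_Icc_of_plateau_ne_zero hδ (left_ne_zero_of_mul hplateau)
    have h₂ := mem_Icc_of_plateau_ne_zero hδ (right_ne_zero_of_mul hplateau)
    refine ⟨⟨?_, ?_⟩, ⟨?_, ?_⟩⟩ <;> linarith [h₁.1, h₁.2, h₂.1, h₂.2]
  refine hclosed.trans (prod_mono ?_ ?_) <;>
    exact fun t ht => ⟨by linarith [ht.1], by linarith [ht.2]⟩

lemma localize_eventuallyEq (hδ : 0 < δ) (hx : x ∈ cell (a + δ) (c + δ) (l - 2 * δ)) :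
    localize a c l δ u =ᶠ[𝓝 x] u := by
  filter_upwards [(isOpen_cell _ _ _).mem_nhds hx] with y hy
  obtain ⟨⟨h₁, h₂⟩, h₃, h₄⟩ := hy
  rw [localize, cutoffAngle, plateau_eq_one hδ (by linarith) (by linarith),
    plateau_eq_one hδ (by linarith) (by linarith)]
  simp

lemma exists_fderiv_cutoffAngle_sq_le : ∃ K > 0, ∀ a c l δ x, 0 < δ →
    fderiv ℝ (cutoffAngle a c l δ) x (1, 0) ^ 2 + fderiv ℝ (cutoffAngle a c l δ) x (0, 1) ^ 2 ≤
      K / δ ^ 2 := by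
  obtain ⟨K, hK0, hK⟩ := exists_abs_deriv_plateau_le
  refine ⟨2 * (π / 2 * K) ^ 2, by positivity, fun a c l δ x hδ => ?_⟩
  have hd (t : ℝ) : HasDerivAt (plateau l δ) (deriv (plateau l δ) t) t :=
    ((contDiff_plateau l δ).differentiable one_ne_zero t).hasDerivAt
  have h₁ := (hd (x.1 - a)).comp_hasFDerivAt x ((hasFDerivAt_fst (𝕜 := ℝ) (p := x)).sub_const a)
  have h₂ := (hd (x.2 - c)).comp_hasFDerivAt x ((hasFDerivAt_snd (𝕜 := ℝ) (p := x)).sub_const c)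
  have hfderiv := ((h₁.mul h₂).const_mul (π / 2)).fderiv
  have hbound (t s : ℝ) :
      (π / 2 * (plateau l δ s * deriv (plateau l δ) t)) ^ 2 ≤ (π / 2 * K) ^ 2 / δ ^ 2 := by
    rw [← div_pow, mul_div_assoc, sq_le_sq, abs_mul, abs_mul, abs_mul,
      abs_of_nonneg (plateau_nonneg _ _ _), abs_of_pos (div_pos hK0 hδ)]
    gcongr
    exact (mul_le_of_le_one_left (abs_nonneg _) (plateau_le_one _ _ _)).trans (hK l δ t hδ)
  have e₁ : fderiv ℝ (cutoffAngle a c l δ) x (1, 0) =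
      π / 2 * (plateau l δ (x.2 - c) * deriv (plateau l δ) (x.1 - a)) :=
    (congrArg (· (1, 0)) hfderiv).trans (by simp)
  have e₂ : fderiv ℝ (cutoffAngle a c l δ) x (0, 1) =
      π / 2 * (plateau l δ (x.1 - a) * deriv (plateau l δ) (x.2 - c)) :=
    (congrArg (· (0, 1)) hfderiv).trans (by simp)
  rw [e₁, e₂]
  linarith [hbound (x.1 - a) (x.2 - c), hbound (x.2 - c) (x.1 - a),
    mul_div_assoc 2 ((π / 2 * K) ^ 2) (δ ^ 2)]

lemma exists_glDensity_localize_le : ∃ K > 0, ∀ A lam u a c l δ x, ContDiff ℝ 1 u →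
    (∀ x, ‖u x‖ ≤ 1) → 0 ≤ lam → 0 < δ → glDensity A lam (localize a c l δ u) x ≤
      glDensity A lam u x +
        (cell (a + δ) (c + δ) (l - 2 * δ))ᶜ.indicator (fun _ => lam / 2 + K / δ ^ 2) x := by
  obtain ⟨K, hK0, hK⟩ := exists_fderiv_cutoffAngle_sq_le
  refine ⟨K, hK0, fun A lam u a c l δ x hu hu1 hlam hδ => ?_⟩
  by_cases hx : x ∈ cell (a + δ) (c + δ) (l - 2 * δ)
  · rw [indicator_of_notMem (not_not.2 hx),
      glDensity_congr_of_eventuallyEq A lam (localize_eventuallyEq hδ hx), add_zero]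
  · rw [indicator_of_mem hx]
    have hmag := magGradSq_sin_mul_le (A := A)
      ((contDiff_cutoffAngle a c l δ).differentiable one_ne_zero x)
      (hu.differentiable one_ne_zero x)
    have hgrad : (fderiv ℝ (cutoffAngle a c l δ) x (1, 0) ^ 2 +
        fderiv ℝ (cutoffAngle a c l δ) x (0, 1) ^ 2) * ‖u x‖ ^ 2 ≤ K / δ ^ 2 :=
      (mul_le_of_le_one_right (by positivity)
        (pow_le_one₀ (norm_nonneg _) (hu1 x))).trans (hK a c l δ x hδ)
    have hpot : -lam * ‖localize a c l δ u x‖ ^ 2 + lam / 2 * ‖localize a c l δ u x‖ ^ 4 ≤ 0 := by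
      have := pow_le_one₀ (n := 2) (norm_nonneg _) ((norm_localize_le a c l δ u x).trans (hu1 x))
      nlinarith [mul_nonneg hlam (sq_nonneg ‖localize a c l δ u x‖)]
    have hlow : -(lam / 2) ≤ -lam * ‖u x‖ ^ 2 + lam / 2 * ‖u x‖ ^ 4 := by
      nlinarith [mul_nonneg hlam (sq_nonneg (‖u x‖ ^ 2 - 1))]
    unfold glDensity localize at *
    linarith

lemma volume_real_layer_le (a c : ℝ) (hδ : 0 ≤ δ) (hδl : 2 * δ ≤ l) :
    volume.real ((cell (a + δ) (c + δ) (l - 2 * δ))ᶜ ∩ cell a c l) ≤ 4 * l * δ := by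
  have hinner : cell (a + δ) (c + δ) (l - 2 * δ) ⊆ cell a c l := by
    refine prod_mono ?_ ?_ <;> exact fun t ht => ⟨by linarith [ht.1], by linarith [ht.2]⟩
  rw [inter_comm, ← sdiff_eq, measureReal_sdiff hinner (measurableSet_cell _ _ _)
    (volume_cell_ne_top _ _ _), volume_real_cell _ _ (by linarith),
    volume_real_cell _ _ (by linarith)]
  nlinarith

lemma exists_integral_glDensity_localize_le : ∃ K > 0, ∀ A lam u a c l, Continuous A →
    ContDiff ℝ 1 u → (∀ x, ‖u x‖ ≤ 1) → 1 ≤ l → 4 ≤ lam →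
    ∫ x, glDensity A lam (localize a c l (√lam)⁻¹ u) x ≤
      (∫ x in cell a c l, glDensity A lam u x) + K * l * √lam := by
  obtain ⟨K, hK0, hK⟩ := exists_glDensity_localize_le
  refine ⟨2 + 4 * K, by positivity, fun A lam u a c l hA hu hu1 hl hlam => ?_⟩
  set δ := (√lam)⁻¹ with hδ_def
  have hsqrt : 2 ≤ √lam := le_sqrt_of_sq_le (by linarith)
  have hδ : 0 < δ := by positivity
  have hδl : 2 * δ ≤ l := by
    have : δ ≤ 2⁻¹ := inv_anti₀ two_pos hsqrt
    linarith
  have hcost : lam / 2 + K / δ ^ 2 = (1 / 2 + K) * lam := by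
    rw [hδ_def, inv_pow, sq_sqrt (by linarith), div_inv_eq_mul]
    ring
  have hmeas : MeasurableSet (cell (a + δ) (c + δ) (l - 2 * δ))ᶜ :=
    (measurableSet_cell _ _ _).compl
  have hui : IntegrableOn ((cell (a + δ) (c + δ) (l - 2 * δ))ᶜ.indicator
      fun _ => lam / 2 + K / δ ^ 2) (cell a c l) :=
    (integrableOn_const (volume_cell_ne_top a c l)).indicator hmeas
  calc ∫ x, glDensity A lam (localize a c l δ u) x
      = ∫ x in cell a c l, glDensity A lam (localize a c l δ u) x :=
        (setIntegral_glDensity_eq_integral (tsupport_localize_subset a c l hδ u)).symm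
    _ ≤ ∫ x in cell a c l, (glDensity A lam u x +
          (cell (a + δ) (c + δ) (l - 2 * δ))ᶜ.indicator (fun _ => lam / 2 + K / δ ^ 2) x) :=
        setIntegral_mono
          (integrableOn_cell (continuous_glDensity hA lam (contDiff_localize a c l δ hu)) a c l)
          ((integrableOn_cell (continuous_glDensity hA lam hu) a c l).add hui)
          fun x => hK A lam u a c l δ x hu hu1 (by linarith) hδ
    _ = (∫ x in cell a c l, glDensity A lam u x) + (1 / 2 + K) * lam *
          volume.real ((cell (a + δ) (c + δ) (l - 2 * δ))ᶜ ∩ cell a c l) := by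
        rw [integral_add (integrableOn_cell (continuous_glDensity hA lam hu) a c l) hui,
          integral_indicator_const _ hmeas, measureReal_restrict_apply hmeas, hcost, smul_eq_mul,
          mul_comm]
    _ ≤ (∫ x in cell a c l, glDensity A lam u x) + (1 / 2 + K) * lam * (4 * l * δ) := by
        gcongr
        exact volume_real_layer_le a c hδ.le hδl
    _ = (∫ x in cell a c l, glDensity A lam u x) + (2 + 4 * K) * l * √lam := by
        rw [hδ_def]
        nth_rw 2 [← sq_sqrt (show 0 ≤ lam by linarith)]
        field_simp
        ring

end Cutoff

/-! ### Lower bound by the magnetic field -/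

section Jacobian

open scoped Convolution

open ContinuousLinearMap (mul)

variable {E : Type*} [NormedAddCommGroup E] [NormedSpace ℝ E] [MeasurableSpace E]
  [BorelSpace E] {μ : Measure E} [μ.IsAddHaarMeasure] {p q : E → ℝ}

lemma integrable_fderiv_apply (hp : ContDiff ℝ 1 p) (hpc : HasCompactSupport p) (e : E) :
    Integrable (fun x => fderiv ℝ p x e) μ :=
  Continuous.integrable_of_hasCompactSupport (by fun_prop (disch := simp)) (hpc.fderiv_apply ℝ e)

lemma integrable_fderiv_mul_fderiv (hp : ContDiff ℝ 1 p) (hpc : HasCompactSupport p)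
    (hq : ContDiff ℝ 1 q) (e f : E) : Integrable (fun x => fderiv ℝ p x e * fderiv ℝ q x f) μ :=
  Continuous.integrable_of_hasCompactSupport (by fun_prop (disch := simp))
    (hpc.fderiv_apply ℝ e).mul_right

variable [FiniteDimensional ℝ E]

lemma integral_fderiv_eq_zero (hp : ContDiff ℝ 1 p) (hpc : HasCompactSupport p) (e : E) :
    ∫ x, fderiv ℝ p x e ∂μ = 0 := by
  have := integral_mul_fderiv_eq_neg_fderiv_mul_of_integrable (μ := μ) (f := p)
    (g := fun _ => (1 : ℝ)) (v := e) (by simpa using integrable_fderiv_apply hp hpc e) (by simp)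
    (by simpa using hp.continuous.integrable_of_hasCompactSupport hpc)
    (fun x _ => hp.differentiable one_ne_zero x) (fun x _ => by fun_prop)
  simpa using this

lemma fderiv_convolution_right_apply (hp : Continuous p) (hq : ContDiff ℝ 1 q)
    (hqc : HasCompactSupport q) (x e : E) :
    fderiv ℝ (p ⋆[mul ℝ ℝ, μ] q) x e = (p ⋆[mul ℝ ℝ, μ] fun y => fderiv ℝ q y e) x := by
  rw [(hqc.hasFDerivAt_convolution_right _ hp.locallyIntegrable hq x).fderiv,
    convolution_precompR_apply _ hp.locallyIntegrable (hqc.fderiv ℝ)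
      (hq.continuous_fderiv one_ne_zero)]

lemma convolution_mul_comm (p q : E → ℝ) : p ⋆[mul ℝ ℝ, μ] q = q ⋆[mul ℝ ℝ, μ] p := by
  ext x
  rw [convolution_mul, convolution_mul_swap]
  simp only [mul_comm]

-- Both sides are second derivatives of the convolution of `p` with the reflection of `q`, taken in
-- either order; this route asks for no second derivatives of `p` or `q`.
lemma integral_fderiv_mul_fderiv_comm (hp : ContDiff ℝ 1 p) (hpc : HasCompactSupport p)
    (hq : ContDiff ℝ 1 q) (hqc : HasCompactSupport q) (e f : E) :
    ∫ x, fderiv ℝ p x e * fderiv ℝ q x f ∂μ = ∫ x, fderiv ℝ p x f * fderiv ℝ q x e ∂μ := by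
  set r : E → ℝ := fun y => q (-y)
  have hr : ContDiff ℝ 1 r := hq.comp contDiff_neg
  have hrc : HasCompactSupport r := hqc.comp_homeomorph (Homeomorph.neg E)
  have hp' (e : E) : Continuous fun x => fderiv ℝ p x e := by
    fun_prop (disch := simp)
  have hr' (e : E) : Continuous fun x => fderiv ℝ r x e := by
    fun_prop (disch := simp)
  have hmove : (fun x => fderiv ℝ p x e) ⋆[mul ℝ ℝ, μ] r =
      p ⋆[mul ℝ ℝ, μ] fun x => fderiv ℝ r x e := by
    ext x
    rw [← fderiv_convolution_right_apply hp.continuous hr hrc, convolution_mul_comm p,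
      fderiv_convolution_right_apply hr.continuous hp hpc, convolution_mul_comm]
  have hswap : ((fun x => fderiv ℝ p x e) ⋆[mul ℝ ℝ, μ] fun x => fderiv ℝ r x f) 0 =
      ((fun x => fderiv ℝ p x f) ⋆[mul ℝ ℝ, μ] fun x => fderiv ℝ r x e) 0 := by
    rw [← fderiv_convolution_right_apply (hp' e) hr hrc, hmove, convolution_mul_comm p,
      fderiv_convolution_right_apply (hr' e) hp hpc, convolution_mul_comm]
  have hreflect (x e : E) : fderiv ℝ r (0 - x) e = -fderiv ℝ q x e := by
    have hq' : HasFDerivAt q (fderiv ℝ q x) (-(0 - x)) := by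
      simpa using (hq.differentiable one_ne_zero x).hasFDerivAt
    have hr' : fderiv ℝ r (0 - x) = (fderiv ℝ q x).comp (-ContinuousLinearMap.id ℝ E) :=
      (hq'.comp (0 - x) (hasFDerivAt_id _).neg).fderiv
    rw [hr']
    simp
  simpa only [convolution_mul, hreflect, mul_neg, integral_neg, neg_inj] using hswap

end Jacobian

/-- The magnetic field `∂₁A₂ - ∂₂A₁` of the potential `A`. -/
def magField (A : ℝ × ℝ → ℝ × ℝ) (x : ℝ × ℝ) : ℝ :=
  (fderiv ℝ A x (1, 0)).2 - (fderiv ℝ A x (0, 1)).1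

/-- The potential `(h²/2 - h x₂, 0)` of the constant field `h`: the linearisation of `Avan` on the
line `x₂ = h`. -/
def linPotential (h : ℝ) (x : ℝ × ℝ) : ℝ × ℝ := (h ^ 2 / 2 - h * x.2, 0)

section MagField

variable {A : ℝ × ℝ → ℝ × ℝ} {v : ℝ × ℝ → ℂ} {x : ℝ × ℝ}

lemma contDiff_linPotential (h : ℝ) : ContDiff ℝ 1 (linPotential h) := by
  unfold linPotential
  fun_prop

lemma magField_linPotential (h : ℝ) (x : ℝ × ℝ) : magField (linPotential h) x = h := by
  have hd : HasFDerivAt (linPotential h)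
      ((-(h • ContinuousLinearMap.snd ℝ ℝ ℝ)).prod (0 : ℝ × ℝ →L[ℝ] ℝ)) x :=
    ((hasFDerivAt_snd.const_mul h).const_sub _).prodMk (hasFDerivAt_const _ _)
  simp [magField, hd.fderiv]

lemma fderiv_mul_norm_sq {a : ℝ × ℝ → ℝ} (ha : DifferentiableAt ℝ a x)
    (hv : DifferentiableAt ℝ v x) (e : ℝ × ℝ) :
    fderiv ℝ (fun y => a y * ‖v y‖ ^ 2) x e = fderiv ℝ a x e * ‖v x‖ ^ 2 +
      2 * a x * ((v x).re * (fderiv ℝ v x e).re + (v x).im * (fderiv ℝ v x e).im) := by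
  rw [(ha.hasFDerivAt.fun_mul hv.hasFDerivAt.norm_sq).fderiv]
  simp [Complex.inner]
  ring

-- Integrated, the first line on the right is a Jacobian and the second a divergence. The inequality
-- is `0 ≤ |D₁v + i D₂v|²`, where `D` is the covariant derivative.
lemma magField_mul_norm_sq_le (hA : DifferentiableAt ℝ A x) (hv : DifferentiableAt ℝ v x) :
    magField A x * ‖v x‖ ^ 2 ≤ magGradSq A v x
      - 2 * (fderiv ℝ (fun y => (v y).re) x (1, 0) * fderiv ℝ (fun y => (v y).im) x (0, 1)
        - fderiv ℝ (fun y => (v y).re) x (0, 1) * fderiv ℝ (fun y => (v y).im) x (1, 0))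
      + (fderiv ℝ (fun y => (A y).2 * ‖v y‖ ^ 2) x (1, 0)
        - fderiv ℝ (fun y => (A y).1 * ‖v y‖ ^ 2) x (0, 1)) := by
  have hre (e : ℝ × ℝ) : fderiv ℝ (fun y => (v y).re) x e = (fderiv ℝ v x e).re :=
    congrArg (· e) (Complex.reCLM.hasFDerivAt.comp x hv.hasFDerivAt).fderiv
  have him (e : ℝ × ℝ) : fderiv ℝ (fun y => (v y).im) x e = (fderiv ℝ v x e).im :=
    congrArg (· e) (Complex.imCLM.hasFDerivAt.comp x hv.hasFDerivAt).fderiv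
  rw [hre, hre, him, him, fderiv_mul_norm_sq hA.snd hv, fderiv_mul_norm_sq hA.fst hv,
    fderiv.snd hA, fderiv.fst hA, magGradSq, magField]
  have hsquare := sq_nonneg ‖(fderiv ℝ v x (1, 0) - Complex.I * (A x).1 * v x) +
    Complex.I * (fderiv ℝ v x (0, 1) - Complex.I * (A x).2 * v x)‖
  simp only [Complex.sq_norm, Complex.normSq_apply, Complex.add_re, Complex.add_im, Complex.sub_re,
    Complex.sub_im, Complex.mul_re, Complex.mul_im, Complex.I_re, Complex.I_im, Complex.ofReal_re,
    Complex.ofReal_im, ContinuousLinearMap.comp_apply, ContinuousLinearMap.coe_fst',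
    ContinuousLinearMap.coe_snd'] at hsquare ⊢
  linarith

lemma integral_magField_mul_norm_sq_le (hA : ContDiff ℝ 1 A) (hv : ContDiff ℝ 1 v)
    (hc : HasCompactSupport v) :
    ∫ x, magField A x * ‖v x‖ ^ 2 ≤ ∫ x, magGradSq A v x := by
  have hsq : HasCompactSupport fun x => ‖v x‖ ^ 2 := hc.comp_left (g := (‖·‖ ^ 2)) (by simp)
  have hsq' : ContDiff ℝ 1 fun x => ‖v x‖ ^ 2 := hv.norm_sq ℝ
  let p : ℝ × ℝ → ℝ := fun x => (v x).re
  let q : ℝ × ℝ → ℝ := fun x => (v x).im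
  have hp : ContDiff ℝ 1 p := Complex.reCLM.contDiff.comp hv
  have hq : ContDiff ℝ 1 q := Complex.imCLM.contDiff.comp hv
  have hpc : HasCompactSupport p := hc.comp_left Complex.zero_re
  have hqc : HasCompactSupport q := hc.comp_left Complex.zero_im
  have hfield : Integrable fun x => magField A x * ‖v x‖ ^ 2 :=
    Continuous.integrable_of_hasCompactSupport
      (by unfold magField; fun_prop (disch := simp)) hsq.mul_left
  have hmag := integrable_magGradSq hA.continuous hv hc
  let J : ℝ × ℝ → ℝ := fun x =>
    fderiv ℝ p x (1, 0) * fderiv ℝ q x (0, 1) - fderiv ℝ p x (0, 1) * fderiv ℝ q x (1, 0)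
  let D : ℝ × ℝ → ℝ := fun x => fderiv ℝ (fun y => (A y).2 * ‖v y‖ ^ 2) x (1, 0)
    - fderiv ℝ (fun y => (A y).1 * ‖v y‖ ^ 2) x (0, 1)
  have hJ : Integrable J := (integrable_fderiv_mul_fderiv hp hpc hq _ _).sub
    (integrable_fderiv_mul_fderiv hp hpc hq _ _)
  have hD : Integrable D := (integrable_fderiv_apply (hA.snd.mul hsq') hsq.mul_left _).sub
    (integrable_fderiv_apply (hA.fst.mul hsq') hsq.mul_left _)
  have hJ0 : ∫ x, J x = 0 := by
    rw [integral_sub (integrable_fderiv_mul_fderiv hp hpc hq _ _)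
      (integrable_fderiv_mul_fderiv hp hpc hq _ _),
      integral_fderiv_mul_fderiv_comm hp hpc hq hqc, sub_self]
  have hD0 : ∫ x, D x = 0 := by
    rw [integral_sub (integrable_fderiv_apply (hA.snd.mul hsq') hsq.mul_left _)
      (integrable_fderiv_apply (hA.fst.mul hsq') hsq.mul_left _),
      integral_fderiv_eq_zero (hA.snd.mul hsq') hsq.mul_left,
      integral_fderiv_eq_zero (hA.fst.mul hsq') hsq.mul_left, sub_self]
  have hmJ : Integrable fun x => magGradSq A v x - 2 * J x := hmag.sub (hJ.const_mul 2)
  calc ∫ x, magField A x * ‖v x‖ ^ 2 ≤ ∫ x, (magGradSq A v x - 2 * J x + D x) :=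
        integral_mono hfield (hmJ.add hD) fun x => magField_mul_norm_sq_le
          (hA.differentiable one_ne_zero x) (hv.differentiable one_ne_zero x)
    _ = ∫ x, magGradSq A v x := by
        rw [integral_add hmJ hD, integral_sub hmag (hJ.const_mul 2),
          integral_const_mul, hJ0, hD0]
        ring

lemma integral_glDensity_linPotential_nonneg {lam h : ℝ} (hlam : 0 ≤ lam) (hh : lam ≤ h)
    (hv : ContDiff ℝ 1 v) (hc : HasCompactSupport v) :
    0 ≤ ∫ x, glDensity (linPotential h) lam v x := by
  have hmag := integrable_magGradSq (contDiff_linPotential h).continuous hv hc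
  have hsq : Integrable fun x => ‖v x‖ ^ 2 :=
    (hv.norm_sq ℝ).continuous.integrable_of_hasCompactSupport
      (hc.comp_left (g := (‖·‖ ^ 2)) (by simp))
  have hfield := integral_magField_mul_norm_sq_le (contDiff_linPotential h) hv hc
  simp only [magField_linPotential, integral_const_mul] at hfield
  calc 0 ≤ (h - lam) * ∫ x, ‖v x‖ ^ 2 :=
        mul_nonneg (sub_nonneg.2 hh) (integral_nonneg fun _ => by positivity)
    _ ≤ (∫ x, magGradSq (linPotential h) v x) - lam * ∫ x, ‖v x‖ ^ 2 := by linarith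
    _ = ∫ x, (magGradSq (linPotential h) v x - lam * ‖v x‖ ^ 2) := by
        rw [integral_sub hmag (hsq.const_mul lam), integral_const_mul]
    _ ≤ ∫ x, glDensity (linPotential h) lam v x :=
        integral_mono (hmag.sub (hsq.const_mul lam))
          (integrable_glDensity (contDiff_linPotential h).continuous lam hv hc)
          fun x => le_add_of_nonneg_right (by positivity)

end MagField

/-! ### Linearisation of the field -/

section Linearisation

variable {v : ℝ × ℝ → ℂ}

lemma sub_le_norm_add_sq {E : Type*} [SeminormedAddCommGroup E] {ε : ℝ} (hε : 0 < ε) (z w : E) :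
    (1 - ε) * ‖z‖ ^ 2 - ε⁻¹ * ‖w‖ ^ 2 ≤ ‖z + w‖ ^ 2 := by
  have hyoung : 2 * ‖z‖ * ‖w‖ ≤ ε * ‖z‖ ^ 2 + ε⁻¹ * ‖w‖ ^ 2 := by
    have : ε * ‖z‖ ^ 2 + ε⁻¹ * ‖w‖ ^ 2 - 2 * ‖z‖ * ‖w‖ = ε⁻¹ * (ε * ‖z‖ - ‖w‖) ^ 2 := by
      field_simp
      ring
    have : 0 ≤ ε⁻¹ * (ε * ‖z‖ - ‖w‖) ^ 2 := by positivity
    linarith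
  have htriangle : (‖z‖ - ‖w‖) ^ 2 ≤ ‖z + w‖ ^ 2 := by
    rw [sq_le_sq, abs_norm]
    simpa using abs_norm_sub_norm_le z (-w)
  nlinarith [sq_nonneg ‖w‖]

lemma sub_le_magGradSq {ε : ℝ} (hε : 0 < ε) (A A' : ℝ × ℝ → ℝ × ℝ) (v : ℝ × ℝ → ℂ) (x : ℝ × ℝ) :
    (1 - ε) * magGradSq A v x
        - ε⁻¹ * (((A x).1 - (A' x).1) ^ 2 + ((A x).2 - (A' x).2) ^ 2) * ‖v x‖ ^ 2
      ≤ magGradSq A' v x := by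
  have hshift (d : ℂ) (α α' : ℝ) :
      (1 - ε) * ‖d - Complex.I * α * v x‖ ^ 2 - ε⁻¹ * ((α - α') ^ 2 * ‖v x‖ ^ 2) ≤
        ‖d - Complex.I * α' * v x‖ ^ 2 := by
    have hnorm : ‖Complex.I * ((α - α' : ℝ) : ℂ) * v x‖ ^ 2 = (α - α') ^ 2 * ‖v x‖ ^ 2 := by
      rw [norm_mul, norm_mul, Complex.norm_I, one_mul, Complex.norm_real, Real.norm_eq_abs,
        mul_pow, sq_abs]
    have hsum : d - Complex.I * α' * v x =
        d - Complex.I * α * v x + Complex.I * ((α - α' : ℝ) : ℂ) * v x := by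
      push_cast
      ring
    rw [← hnorm, hsum]
    exact sub_le_norm_add_sq hε _ _
  have h₁ := hshift (fderiv ℝ v x (1, 0)) (A x).1 (A' x).1
  have h₂ := hshift (fderiv ℝ v x (0, 1)) (A x).2 (A' x).2
  unfold magGradSq
  linarith

lemma two_le_sqrt {lam : ℝ} (hlam : 4 ≤ lam) : 2 ≤ √lam :=
  Real.le_sqrt_of_sq_le (by linarith)

lemma sub_le_glDensity_Avan {lam h : ℝ} {x : ℝ × ℝ} (hlam : 0 < lam) (hx : |x.2 - h| ≤ 2)
    (hv : ‖v x‖ ≤ 1) :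
    (1 - (√lam)⁻¹) * glDensity (linPotential h) lam v x - 5 * √lam ≤ glDensity Avan lam v x := by
  have hpos : 0 < √lam := Real.sqrt_pos.2 hlam
  have hsq : ‖v x‖ ^ 2 ≤ 1 := pow_le_one₀ (norm_nonneg _) hv
  have hdiff : ((linPotential h x).1 - (Avan x).1) ^ 2
      + ((linPotential h x).2 - (Avan x).2) ^ 2 ≤ 4 := by
    have h₁ : (linPotential h x).1 - (Avan x).1 = (x.2 - h) ^ 2 / 2 := by
      simp only [linPotential, Avan]
      ring
    have h₂ : (x.2 - h) ^ 2 ≤ 2 ^ 2 := sq_le_sq' (abs_le.1 hx).1 (abs_le.1 hx).2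
    rw [h₁]
    simp only [linPotential, Avan]
    nlinarith [sq_nonneg (x.2 - h)]
  have herror : √lam * (((linPotential h x).1 - (Avan x).1) ^ 2
      + ((linPotential h x).2 - (Avan x).2) ^ 2) * ‖v x‖ ^ 2 ≤ √lam * 4 * 1 := by gcongr
  have hmag := sub_le_magGradSq (inv_pos.2 hpos) (linPotential h) Avan v x
  rw [inv_inv] at hmag
  have hlam' : (√lam)⁻¹ * lam = √lam := by rw [inv_mul_eq_div, Real.div_sqrt]
  have hexpand : (1 - (√lam)⁻¹) * glDensity (linPotential h) lam v x =
      (1 - (√lam)⁻¹) * magGradSq (linPotential h) v x - lam * ‖v x‖ ^ 2 + lam / 2 * ‖v x‖ ^ 4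
        + √lam * (‖v x‖ ^ 2 - ‖v x‖ ^ 4 / 2) := by
    unfold glDensity
    linear_combination (‖v x‖ ^ 2 - ‖v x‖ ^ 4 / 2) * hlam'
  have hpot : √lam * (‖v x‖ ^ 2 - ‖v x‖ ^ 4 / 2) ≤ √lam * 1 := by
    gcongr
    nlinarith [sq_nonneg (‖v x‖ ^ 2)]
  rw [hexpand]
  unfold glDensity
  linarith

lemma sub_le_integral_glDensity_Avan (hv : ContDiff ℝ 1 v) (hv₁ : ∀ x, ‖v x‖ ≤ 1)
    {a c l lam : ℝ} (hs : tsupport v ⊆ cell a c l) (hlam : 0 < lam) (hl₀ : 0 ≤ l) (hl₂ : l ≤ 2) :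
    (1 - (√lam)⁻¹) * (∫ x, glDensity (linPotential (c + l)) lam v x) - 20 * √lam ≤
      ∫ x, glDensity Avan lam v x := by
  have hlin : IntegrableOn (glDensity (linPotential (c + l)) lam v) (cell a c l) :=
    integrableOn_cell (continuous_glDensity (contDiff_linPotential _).continuous lam hv) ..
  have hconst : IntegrableOn (fun _ : ℝ × ℝ => 5 * √lam) (cell a c l) :=
    integrableOn_const (volume_cell_ne_top a c l)
  have hmono := setIntegral_mono_on ((hlin.const_mul (1 - (√lam)⁻¹)).sub hconst)
    (integrableOn_cell (continuous_glDensity continuous_Avan lam hv) ..)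
    (measurableSet_cell a c l) fun x hx => sub_le_glDensity_Avan hlam
      (abs_le.2 ⟨by linarith [hx.2.1], by linarith [hx.2.2]⟩) (hv₁ x)
  simp only [Pi.sub_apply] at hmono
  rw [integral_sub (hlin.const_mul _) hconst, integral_const_mul, setIntegral_const,
    volume_real_cell a c hl₀, smul_eq_mul, setIntegral_glDensity_eq_integral hs,
    setIntegral_glDensity_eq_integral hs] at hmono
  have harea : l ^ 2 * (5 * √lam) ≤ 2 ^ 2 * (5 * √lam) := by gcongr
  linarith

end Linearisation

/-! ### Magnetic translations and dilations -/

/-- The pull-back of `v` by the affine map `y ↦ p + s y`, gauge transformed by the phase `φ`. -/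
def transplant (φ : ℝ × ℝ → ℝ) (p : ℝ × ℝ) (s : ℝ) (v : ℝ × ℝ → ℂ) (y : ℝ × ℝ) : ℂ :=
  Complex.exp (φ y * Complex.I) * v (p + s • y)

section Transplant

variable {φ : ℝ × ℝ → ℝ} {p : ℝ × ℝ} {s : ℝ} {v : ℝ × ℝ → ℂ} {A A' : ℝ × ℝ → ℝ × ℝ}

lemma contDiff_transplant (hφ : ContDiff ℝ 1 φ) (p : ℝ × ℝ) (s : ℝ) (hv : ContDiff ℝ 1 v) :
    ContDiff ℝ 1 (transplant φ p s v) :=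
  ((Complex.ofRealCLM.contDiff.comp hφ).mul contDiff_const).cexp.mul (hv.comp (by fun_prop))

lemma norm_transplant (φ : ℝ × ℝ → ℝ) (p : ℝ × ℝ) (s : ℝ) (v : ℝ × ℝ → ℂ) (y : ℝ × ℝ) :
    ‖transplant φ p s v y‖ = ‖v (p + s • y)‖ := by
  rw [transplant, norm_mul, Complex.norm_exp_ofReal_mul_I, one_mul]

lemma tsupport_transplant_subset (φ : ℝ × ℝ → ℝ) (p : ℝ × ℝ) (s : ℝ) (v : ℝ × ℝ → ℂ) :
    tsupport (transplant φ p s v) ⊆ (fun y => p + s • y) ⁻¹' tsupport v :=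
  closure_minimal (fun _ hy => subset_tsupport v (right_ne_zero_of_mul hy))
    ((isClosed_tsupport v).preimage (by fun_prop))

lemma covDeriv_transplant {φ' : ℝ × ℝ →L[ℝ] ℝ} {y e : ℝ × ℝ} (hφ : HasFDerivAt φ φ' y)
    (hv : DifferentiableAt ℝ v (p + s • y))
    (hA : (A' y).1 * e.1 + (A' y).2 * e.2 =
      s * ((A (p + s • y)).1 * e.1 + (A (p + s • y)).2 * e.2) + φ' e) :
    covDeriv A' (transplant φ p s v) y e =
      Complex.exp (φ y * Complex.I) * (s * covDeriv A v (p + s • y) e) := by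
  have hphase := ((Complex.ofRealCLM.hasFDerivAt.comp y hφ).mul_const Complex.I).cexp
  have hmove : HasFDerivAt (fun z => v (p + s • z)) _ y :=
    hv.hasFDerivAt.comp y (((hasFDerivAt_id y).const_smul s).const_add p)
  have hderiv : fderiv ℝ (transplant φ p s v) y e = Complex.exp (φ y * Complex.I) *
      (s * fderiv ℝ v (p + s • y) e + Complex.I * φ' e * v (p + s • y)) := by
    have : fderiv ℝ (transplant φ p s v) y = _ := (hphase.fun_mul hmove).fderiv
    rw [this]
    simp only [Function.comp_apply, Complex.ofRealCLM_apply, ContinuousLinearMap.comp_smulₛₗ,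
      ringHom_apply, ContinuousLinearMap.comp_id, add_apply, smul_apply, Complex.real_smul,
      smul_eq_mul, ContinuousLinearMap.comp_apply]
    ring
  have hA' : ((A' y).1 * e.1 + (A' y).2 * e.2 : ℂ) =
      s * ((A (p + s • y)).1 * e.1 + (A (p + s • y)).2 * e.2) + φ' e := mod_cast hA
  rw [covDeriv, covDeriv, hderiv, hA', transplant]
  ring

lemma magGradSq_transplant {φ' : ℝ × ℝ →L[ℝ] ℝ} {y : ℝ × ℝ} (hφ : HasFDerivAt φ φ' y)
    (hv : DifferentiableAt ℝ v (p + s • y)) (hA₁ : (A' y).1 = s * (A (p + s • y)).1 + φ' (1, 0))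
    (hA₂ : (A' y).2 = s * (A (p + s • y)).2 + φ' (0, 1)) :
    magGradSq A' (transplant φ p s v) y = s ^ 2 * magGradSq A v (p + s • y) := by
  rw [magGradSq_eq_covDeriv, magGradSq_eq_covDeriv,
    covDeriv_transplant (A := A) hφ hv (by simpa using hA₁),
    covDeriv_transplant (A := A) hφ hv (by simpa using hA₂)]
  simp only [norm_mul, Complex.norm_exp_ofReal_mul_I, Complex.norm_real, Real.norm_eq_abs, one_mul,
    mul_pow, sq_abs]
  ring

lemma integral_glDensity_transplant {φ' : ℝ × ℝ → ℝ × ℝ →L[ℝ] ℝ} (hs : s ≠ 0)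
    (hφ : ∀ y, HasFDerivAt φ (φ' y) y) (hv : Differentiable ℝ v)
    (hA₁ : ∀ y, (A' y).1 = s * (A (p + s • y)).1 + φ' y (1, 0))
    (hA₂ : ∀ y, (A' y).2 = s * (A (p + s • y)).2 + φ' y (0, 1)) (lam : ℝ) :
    ∫ y, glDensity A' (s ^ 2 * lam) (transplant φ p s v) y = ∫ x, glDensity A lam v x := by
  have hpointwise (y : ℝ × ℝ) : glDensity A' (s ^ 2 * lam) (transplant φ p s v) y =
      s ^ 2 * glDensity A lam v (p + s • y) := by
    rw [glDensity, glDensity, magGradSq_transplant (hφ y) (hv _) (hA₁ y) (hA₂ y), norm_transplant]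
    ring
  simp only [hpointwise]
  rw [integral_const_mul, Measure.integral_comp_smul volume (fun x => glDensity A lam v (p + x)) s,
    integral_add_left_eq_self]
  have : 0 < s ^ 2 := by positivity
  simp [abs_of_pos this, hs]

end Transplant

section MagneticMaps

variable {v : ℝ × ℝ → ℂ}

/-- The magnetic translation by `p`, which leaves the energy of the constant field invariant. -/
def magTranslate (p : ℝ × ℝ) (v : ℝ × ℝ → ℂ) : ℝ × ℝ → ℂ :=
  transplant (fun y => (p.2 * y.1 - p.1 * y.2) / 2) p 1 v

lemma integral_glDensity_magTranslate (p : ℝ × ℝ) (hv : Differentiable ℝ v) (lam : ℝ) :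
    ∫ y, glDensity A₀ lam (magTranslate p v) y = ∫ x, glDensity A₀ lam v x := by
  have hφ (y : ℝ × ℝ) := (((hasFDerivAt_fst (𝕜 := ℝ) (p := y)).const_mul p.2).fun_sub
    ((hasFDerivAt_snd (𝕜 := ℝ) (p := y)).const_mul p.1)).mul_const (2 : ℝ)⁻¹
  have h := integral_glDensity_transplant (A := A₀) (A' := A₀) (p := p) one_ne_zero hφ hv
    (fun y => by
      simp only [A₀, one_smul, one_mul, Prod.snd_add, smul_apply, sub_apply, smul_eq_mul, mul_one,
        mul_zero, sub_zero, ContinuousLinearMap.coe_fst', ContinuousLinearMap.coe_snd']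
      ring)
    (fun y => by
      simp only [A₀, one_smul, one_mul, Prod.fst_add, smul_apply, sub_apply, smul_eq_mul, mul_one,
        mul_zero, zero_sub, ContinuousLinearMap.coe_fst', ContinuousLinearMap.coe_snd']
      ring) lam
  simpa [magTranslate, div_eq_mul_inv] using h

lemma contDiff_magTranslate (p : ℝ × ℝ) (hv : ContDiff ℝ 1 v) : ContDiff ℝ 1 (magTranslate p v) :=
  contDiff_transplant (by fun_prop) p 1 hv

lemma tsupport_magTranslate_subset {a c l : ℝ} (p : ℝ × ℝ) (hs : tsupport v ⊆ cell a c l) :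
    tsupport (magTranslate p v) ⊆ cell (a - p.1) (c - p.2) l := fun y hy => by
  have h := hs (tsupport_transplant_subset _ p 1 v hy)
  simp only [cell, mem_prod, mem_Ioo, one_smul, Prod.fst_add, Prod.snd_add] at h ⊢
  constructor <;> constructor <;> linarith

/-- The transplantation turning the constant field `h` into the unit field: the unit length becomes
`h^(-1/2)`, and the phase passes from the gauge of `linPotential h` to the symmetric gauge. -/
def rescale (h : ℝ) (p : ℝ × ℝ) (v : ℝ × ℝ → ℂ) : ℝ × ℝ → ℂ :=
  transplant (fun y => y.1 * y.2 / 2 + (√h * p.2 - (√h)⁻¹ * (h ^ 2 / 2)) * y.1) p (√h)⁻¹ v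

lemma integral_glDensity_rescale {h : ℝ} (hh : 0 < h) (p : ℝ × ℝ) (hv : Differentiable ℝ v)
    (lam : ℝ) : ∫ y, glDensity A₀ (lam / h) (rescale h p v) y =
      ∫ x, glDensity (linPotential h) lam v x := by
  have hS : 0 < √h := Real.sqrt_pos.2 hh
  have hS₂ : √h ^ 2 = h := Real.sq_sqrt hh.le
  have hφ (y : ℝ × ℝ) := (((hasFDerivAt_fst (𝕜 := ℝ) (p := y)).fun_mul
    (hasFDerivAt_snd (𝕜 := ℝ) (p := y))).mul_const (2 : ℝ)⁻¹).fun_add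
      ((hasFDerivAt_fst (𝕜 := ℝ) (p := y)).const_mul (√h * p.2 - (√h)⁻¹ * (h ^ 2 / 2)))
  have hcoupling : (√h)⁻¹ ^ 2 * lam = lam / h := by rw [inv_pow, hS₂, inv_mul_eq_div]
  have hfirst (y : ℝ × ℝ) : -y.2 / 2 = (√h)⁻¹ * (h ^ 2 / 2 - h * (p.2 + (√h)⁻¹ * y.2)) +
      (2⁻¹ * y.2 + (√h * p.2 - (√h)⁻¹ * (h ^ 2 / 2))) := by
    field_simp
    linear_combination (-2 * y.2 - 2 * √h * p.2) * hS₂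
  have := integral_glDensity_transplant (A := linPotential h) (A' := A₀) (p := p)
    (inv_pos.2 hS).ne' hφ hv (fun y => by simpa [A₀, linPotential] using hfirst y)
    (fun y => by
      simp only [A₀, linPotential, Prod.snd_add, Prod.smul_snd, smul_add, add_apply, smul_apply,
        smul_eq_mul, mul_one, mul_zero, add_zero, zero_add, ContinuousLinearMap.coe_fst',
        ContinuousLinearMap.coe_snd']
      ring) lam
  rw [hcoupling] at this
  simpa [rescale, div_eq_mul_inv] using this

lemma contDiff_rescale (h : ℝ) (p : ℝ × ℝ) (hv : ContDiff ℝ 1 v) : ContDiff ℝ 1 (rescale h p v) :=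
  contDiff_transplant (by fun_prop) p _ hv

lemma tsupport_rescale_subset {h a c l : ℝ} (hh : 0 < h) (hs : tsupport v ⊆ cell a c l) :
    tsupport (rescale h (a, c) v) ⊆ cell 0 0 (√h * l) := fun y hy => by
  have hS : 0 < √h := Real.sqrt_pos.2 hh
  have hy' := hs (tsupport_transplant_subset _ (a, c) (√h)⁻¹ v hy)
  simp only [cell, mem_prod, mem_Ioo, Prod.fst_add, Prod.snd_add, Prod.smul_fst, Prod.smul_snd,
    smul_eq_mul, lt_add_iff_pos_right, add_lt_add_iff_left, inv_mul_lt_iff₀ hS, inv_pos, hS,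
    mul_pos_iff_of_pos_left, zero_add] at hy' ⊢
  exact hy'

end MagneticMaps

/-! ### The energy per unit area -/

lemma neg_half_mul_sq_le_setIntegral_glDensity {A : ℝ × ℝ → ℝ × ℝ} {lam l : ℝ} {u : ℝ × ℝ → ℂ}
    (hA : Continuous A) (hlam : 0 ≤ lam) (hu : ContDiff ℝ 1 u) (a c : ℝ) (hl : 0 ≤ l) :
    -(lam / 2) * l ^ 2 ≤ ∫ x in cell a c l, glDensity A lam u x := by
  have h := setIntegral_mono_on (integrableOn_const (volume_cell_ne_top a c l))
    (integrableOn_cell (continuous_glDensity hA lam hu) a c l) (measurableSet_cell a c l)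
    fun x _ => neg_half_mul_le_glDensity A hlam u x
  rwa [setIntegral_const, volume_real_cell a c hl, smul_eq_mul, mul_comm] at h

section GroundState

variable {b b' r : ℝ} {u : ℝ × ℝ → ℂ}

lemma Fsq_eq_mul_integral_glDensity (hb : b ≠ 0) (r : ℝ) (u : ℝ × ℝ → ℂ) :
    Fsq b r u = b * ∫ x in Qsq r, glDensity A₀ b⁻¹ u x := by
  rw [Fsq, ← integral_const_mul]
  congr with x
  unfold glDensity
  field_simp

lemma neg_half_mul_sq_le_Fsq (hb : 0 < b) (hr : 0 ≤ r) (hu : ContDiff ℝ 1 u) :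
    -(1 / 2) * r ^ 2 ≤ Fsq b r u := by
  rw [Fsq_eq_mul_integral_glDensity hb.ne', Qsq_eq_cell]
  calc -(1 / 2) * r ^ 2 = b * (-(b⁻¹ / 2) * r ^ 2) := by field_simp
    _ ≤ _ := by
      gcongr
      exact neg_half_mul_sq_le_setIntegral_glDensity continuous_A₀ (inv_nonneg.2 hb.le) hu _ _ hr

lemma Fsq_mono_left (hbb' : b ≤ b') (r : ℝ) (hu : ContDiff ℝ 1 u) : Fsq b r u ≤ Fsq b' r u := by
  have hui (b : ℝ) : IntegrableOn
      (fun x => b * magGradSq A₀ u x - ‖u x‖ ^ 2 + ‖u x‖ ^ 4 / 2) (Qsq r) := by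
    have := continuous_magGradSq continuous_A₀ hu
    have := hu.continuous
    rw [Qsq_eq_cell]
    exact integrableOn_cell (by fun_prop) ..
  refine setIntegral_mono (hui b) (hui b') fun x => ?_
  have := mul_le_mul_of_nonneg_right hbb' (magGradSq_nonneg A₀ u x)
  dsimp only
  linarith

lemma memH10sq_zero (r : ℝ) : MemH10sq r 0 := ⟨contDiff_const, fun _ _ => rfl⟩

lemma eD_le_Fsq (hb : 0 < b) (hr : 0 ≤ r) (hu : MemH10sq r u) : eD b r ≤ Fsq b r u :=
  csInf_le ⟨-(1 / 2) * r ^ 2, forall_mem_image.2 fun _ hv => neg_half_mul_sq_le_Fsq hb hr hv.1⟩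
    ⟨u, hu, rfl⟩

lemma le_eD {m : ℝ} (h : ∀ u, MemH10sq r u → m ≤ Fsq b r u) : m ≤ eD b r :=
  le_csInf ⟨_, 0, memH10sq_zero r, rfl⟩ (forall_mem_image.2 h)

lemma eD_nonpos (hb : 0 < b) (hr : 0 ≤ r) : eD b r ≤ 0 := by
  simpa [Fsq, magGradSq] using eD_le_Fsq hb hr (memH10sq_zero r)

lemma neg_half_mul_sq_le_eD (hb : 0 < b) (hr : 0 ≤ r) : -(1 / 2) * r ^ 2 ≤ eD b r :=
  le_eD fun _ hu => neg_half_mul_sq_le_Fsq hb hr hu.1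

lemma eD_mono_left (hb : 0 < b) (hbb' : b ≤ b') (hr : 0 ≤ r) : eD b r ≤ eD b' r :=
  le_eD fun _ hu => (eD_le_Fsq hb hr hu).trans (Fsq_mono_left hbb' r hu.1)

end GroundState

namespace IsLimitG

variable {g : ℝ → ℝ}

lemma nonpos (hg : IsLimitG g) {b : ℝ} (hb : 0 < b) : g b ≤ 0 := by
  refine le_of_tendsto (hg b hb) ?_
  filter_upwards [eventually_ge_atTop 0] with r hr
  exact div_nonpos_of_nonpos_of_nonneg (eD_nonpos hb hr) (sq_nonneg r)

lemma neg_half_le (hg : IsLimitG g) {b : ℝ} (hb : 0 < b) : -(1 / 2) ≤ g b := by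
  refine ge_of_tendsto (hg b hb) ?_
  filter_upwards [eventually_gt_atTop 0] with r hr
  rw [le_div_iff₀ (by positivity)]
  exact neg_half_mul_sq_le_eD hb hr.le

lemma monotoneOn (hg : IsLimitG g) : MonotoneOn g (Ioi 0) := by
  intro b hb b' hb' hbb'
  refine le_of_tendsto_of_tendsto (hg b hb) (hg b' hb') ?_
  filter_upwards [eventually_ge_atTop 0] with r hr
  have := eD_mono_left hb hbb' hr
  gcongr

end IsLimitG

/-! ### Tiling a large square by magnetic translates -/

section Tiling

variable {A : ℝ × ℝ → ℝ × ℝ} {lam : ℝ}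

lemma glDensity_sum {ι : Type*} {s : Finset ι} {w : ι → ℝ × ℝ → ℂ}
    (hd : (s : Set ι).PairwiseDisjoint fun k => tsupport (w k)) (y : ℝ × ℝ) :
    glDensity A lam (fun z => ∑ k ∈ s, w k z) y = ∑ k ∈ s, glDensity A lam (w k) y := by
  by_cases h : ∃ k₀ ∈ s, y ∈ tsupport (w k₀)
  · obtain ⟨k₀, hk₀, hy⟩ := h
    have hne (k : ι) (hk : k ∈ s) (hkk : k ≠ k₀) : y ∉ tsupport (w k) := fun hy' =>
      disjoint_left.1 (hd hk hk₀ hkk) hy' hy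
    have hvanish : ∀ᶠ z in 𝓝 y, ∀ k ∈ s, k ≠ k₀ → w k z = 0 :=
      (Finset.eventually_all s).2 fun k hk => eventually_imp_distrib_left.2 fun hkk =>
        notMem_tsupport_iff_eventuallyEq.1 (hne k hk hkk)
    have hsum : (fun z => ∑ k ∈ s, w k z) =ᶠ[𝓝 y] w k₀ :=
      hvanish.mono fun z hz => Finset.sum_eq_single_of_mem k₀ hk₀ hz
    rw [glDensity_congr_of_eventuallyEq A lam hsum, Finset.sum_eq_single_of_mem k₀ hk₀
      fun k hk hkk => glDensity_eq_zero_of_notMem_tsupport (hne k hk hkk)]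
  · push Not at h
    have hvanish : ∀ᶠ z in 𝓝 y, ∀ k ∈ s, w k z = 0 :=
      (Finset.eventually_all s).2 fun k hk => notMem_tsupport_iff_eventuallyEq.1 (h k hk)
    have hsum : (fun z => ∑ k ∈ s, w k z) =ᶠ[𝓝 y] 0 :=
      hvanish.mono fun z hz => Finset.sum_eq_zero hz
    rw [glDensity_congr_of_eventuallyEq A lam hsum,
      Finset.sum_eq_zero fun k hk => glDensity_eq_zero_of_notMem_tsupport (h k hk)]
    simp [glDensity, magGradSq]

lemma monotone_add_natCast_mul (a : ℝ) {r : ℝ} (hr : 0 ≤ r) :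
    Monotone fun i : ℕ => a + i * r := fun i j hij => by
  have : (i : ℝ) ≤ j := mod_cast hij
  dsimp only
  gcongr

lemma disjoint_cell_grid (a c : ℝ) {r : ℝ} (hr : 0 ≤ r) {k k' : ℕ × ℕ} (hk : k ≠ k') :
    Disjoint (cell (a + k.1 * r) (c + k.2 * r) r) (cell (a + k'.1 * r) (c + k'.2 * r) r) := by
  have hIoo (a : ℝ) {i j : ℕ} (hij : i ≠ j) :
      Disjoint (Ioo (a + i * r) (a + i * r + r)) (Ioo (a + j * r) (a + j * r + r)) := by
    have h := (monotone_add_natCast_mul a hr).pairwise_disjoint_on_Ioo_succ hij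
    simpa only [Function.onFun, Nat.succ_eq_succ, Nat.cast_succ, add_one_mul, add_assoc] using h
  by_cases h : k.1 = k'.1
  · exact (hIoo c fun h' => hk (Prod.ext h h')).set_prod_right _ _
  · exact (hIoo a h).set_prod_left _ _

lemma cell_grid_subset (a c : ℝ) {r : ℝ} (hr : 0 ≤ r) {N i j : ℕ} (hi : i < N) (hj : j < N) :
    cell (a + i * r) (c + j * r) r ⊆ cell a c (N * r) := by
  have hlt {i : ℕ} (hi : i < N) : i * r + r ≤ N * r := by
    have : (i : ℝ) + 1 ≤ N := mod_cast hi
    nlinarith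
  have hi' : 0 ≤ i * r := by positivity
  have hj' : 0 ≤ j * r := by positivity
  exact prod_mono (Ioo_subset_Ioo (by linarith) (by linarith [hlt hi]))
    (Ioo_subset_Ioo (by linarith) (by linarith [hlt hj]))

lemma eD_natCast_mul_le {a b c r : ℝ} {w : ℝ × ℝ → ℂ} (hb : 0 < b) (hr : 0 ≤ r)
    (hw : ContDiff ℝ 1 w) (hs : tsupport w ⊆ cell a c r) (N : ℕ) :
    eD b (N * r) ≤ N ^ 2 * (b * ∫ x, glDensity A₀ b⁻¹ w x) := by
  have hNr : 0 ≤ N * r := by positivity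
  let o : ℝ := -(N * r) / 2
  let p (k : ℕ × ℕ) : ℝ × ℝ := (a - (o + k.1 * r), c - (o + k.2 * r))
  have hsupp (k : ℕ × ℕ) :
      tsupport (magTranslate (p k) w) ⊆ cell (o + k.1 * r) (o + k.2 * r) r := by
    simpa [p] using tsupport_magTranslate_subset (p k) hs
  let s := Finset.range N ×ˢ Finset.range N
  have hsubset (k : ℕ × ℕ) (hk : k ∈ s) : tsupport (magTranslate (p k) w) ⊆ Qsq (N * r) := by
    obtain ⟨hi, hj⟩ := Finset.mem_product.1 hk
    rw [Qsq_eq_cell]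
    exact (hsupp k).trans (cell_grid_subset o o hr (Finset.mem_range.1 hi) (Finset.mem_range.1 hj))
  have hd : (s : Set (ℕ × ℕ)).PairwiseDisjoint fun k => tsupport (magTranslate (p k) w) :=
    fun k _ k' _ hk => (disjoint_cell_grid o o hr hk).mono (hsupp k) (hsupp k')
  have hmem : MemH10sq (N * r) fun z => ∑ k ∈ s, magTranslate (p k) w z := by
    refine ⟨ContDiff.sum fun k _ => contDiff_magTranslate (p k) hw, fun y hy => ?_⟩
    rw [Qsq_eq_cell, (isOpen_cell _ _ _).frontier_eq, ← Qsq_eq_cell] at hy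
    exact Finset.sum_eq_zero fun k hk => image_eq_zero_of_notMem_tsupport
      fun hyk => hy.2 (hsubset k hk hyk)
  refine (eD_le_Fsq hb hNr hmem).trans (le_of_eq ?_)
  rw [Fsq_eq_mul_integral_glDensity hb.ne']
  simp_rw [glDensity_sum hd]
  rw [integral_finsetSum s fun k _ => by
    rw [Qsq_eq_cell]
    exact integrableOn_cell (continuous_glDensity continuous_A₀ _ (contDiff_magTranslate _ hw)) ..]
  rw [Finset.sum_congr rfl fun k hk => (setIntegral_glDensity_eq_integral (hsubset k hk)).trans
    (integral_glDensity_magTranslate (p k) (hw.differentiable one_ne_zero) b⁻¹)]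
  simp only [s, Finset.sum_const, Finset.card_product, Finset.card_range, nsmul_eq_mul,
    Nat.cast_mul]
  ring

lemma IsLimitG.mul_sq_le {g : ℝ → ℝ} (hg : IsLimitG g) {a b c r : ℝ} {w : ℝ × ℝ → ℂ} (hb : 0 < b)
    (hr : 0 < r) (hw : ContDiff ℝ 1 w) (hs : tsupport w ⊆ cell a c r) :
    g b * r ^ 2 ≤ b * ∫ x, glDensity A₀ b⁻¹ w x := by
  have hlim := (hg b hb).comp (tendsto_natCast_atTop_atTop.atTop_mul_const hr)
  rw [← le_div_iff₀ (by positivity)]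
  refine le_of_tendsto hlim ?_
  filter_upwards [eventually_gt_atTop 0] with N hN
  have : (0 : ℝ) < N := mod_cast hN
  rw [Function.comp_apply, div_le_div_iff₀ (by positivity) (by positivity)]
  calc eD b (N * r) * r ^ 2 ≤ N ^ 2 * (b * ∫ x, glDensity A₀ b⁻¹ w x) * r ^ 2 := by
        gcongr
        exact eD_natCast_mul_le hb hr.le hw hs N
    _ = (b * ∫ x, glDensity A₀ b⁻¹ w x) * (N * r) ^ 2 := by ring

lemma IsLimitG.mul_le_integral_glDensity_linPotential {g : ℝ → ℝ} (hg : IsLimitG g)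
    {a c l h lam : ℝ} {v : ℝ × ℝ → ℂ} (hl : 0 < l) (hh : 0 < h) (hlam : 0 < lam)
    (hv : ContDiff ℝ 1 v) (hs : tsupport v ⊆ cell a c l) :
    lam * l ^ 2 * g (h / lam) ≤ ∫ x, glDensity (linPotential h) lam v x := by
  have hS : 0 < √h := Real.sqrt_pos.2 hh
  have hcell := hg.mul_sq_le (div_pos hh hlam) (mul_pos hS hl) (contDiff_rescale h (a, c) hv)
    (tsupport_rescale_subset hh hs)
  rw [inv_div, integral_glDensity_rescale hh (a, c) (hv.differentiable one_ne_zero), mul_pow,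
    Real.sq_sqrt hh.le, div_mul_eq_mul_div, le_div_iff₀ hlam] at hcell
  refine le_of_mul_le_mul_left ?_ hh
  linarith

end Tiling

/-! ### Cells of low field -/

/-- The monotone extension of `g` by its extreme values: `-1/2` on `(-∞, 0]` and `0` on `[1, ∞)`. It
is what the energy of a cell is compared with, whatever the field in the cell. -/
def gExt (g : ℝ → ℝ) (b : ℝ) : ℝ := if b ≤ 0 then -(1 / 2) else if b < 1 then g b else 0

section ExtendedG

variable {g : ℝ → ℝ} {b : ℝ}

lemma gExt_of_nonpos (hb : b ≤ 0) : gExt g b = -(1 / 2) := if_pos hb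

lemma gExt_of_mem_Ioo (hb : b ∈ Ioo 0 1) : gExt g b = g b := by
  rw [gExt, if_neg hb.1.not_ge, if_pos hb.2]

lemma gExt_of_one_le (hb : 1 ≤ b) : gExt g b = 0 := by
  rw [gExt, if_neg (by linarith), if_neg hb.not_gt]

lemma IsLimitG.gExt_nonpos (hg : IsLimitG g) (b : ℝ) : gExt g b ≤ 0 := by
  unfold gExt
  split_ifs with h₀ h₁
  · norm_num
  · exact hg.nonpos (not_le.1 h₀)
  · rfl

lemma IsLimitG.neg_half_le_gExt (hg : IsLimitG g) (b : ℝ) : -(1 / 2) ≤ gExt g b := by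
  unfold gExt
  split_ifs with h₀ h₁
  · rfl
  · exact hg.neg_half_le (not_le.1 h₀)
  · norm_num

lemma IsLimitG.gExt_monotone (hg : IsLimitG g) : Monotone (gExt g) := by
  intro b b' hbb'
  rcases le_or_gt b 0 with h₀ | h₀
  · rw [gExt_of_nonpos h₀]
    exact hg.neg_half_le_gExt b'
  rcases le_or_gt 1 b' with h₁ | h₁
  · rw [gExt_of_one_le h₁]
    exact hg.gExt_nonpos b
  rw [gExt_of_mem_Ioo ⟨h₀, hbb'.trans_lt h₁⟩, gExt_of_mem_Ioo ⟨h₀.trans_le hbb', h₁⟩]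
  exact hg.monotoneOn h₀ (h₀.trans_le hbb') hbb'

lemma IsLimitG.mul_gExt_le_integral_glDensity_linPotential (hg : IsLimitG g) {a c l h lam : ℝ}
    {v : ℝ × ℝ → ℂ} (hl : 0 < l) (hh : 0 < h) (hlam : 0 < lam) (hv : ContDiff ℝ 1 v)
    (hs : tsupport v ⊆ cell a c l) :
    lam * l ^ 2 * gExt g (h / lam) ≤ ∫ x, glDensity (linPotential h) lam v x := by
  rcases lt_or_ge (h / lam) 1 with h₁ | h₁
  · rw [gExt_of_mem_Ioo ⟨div_pos hh hlam, h₁⟩]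
    exact hg.mul_le_integral_glDensity_linPotential hl hh hlam hv hs
  · rw [gExt_of_one_le h₁, mul_zero]
    exact integral_glDensity_linPotential_nonneg hlam.le ((one_le_div hlam).1 h₁) hv
      (hasCompactSupport_of_tsupport_subset_cell hs)

lemma exists_le_setIntegral_cell_glDensity_Avan : ∃ C > 0, ∀ {g}, IsLimitG g →
    ∀ {lam a c l : ℝ} {u : ℝ × ℝ → ℂ}, ContDiff ℝ 1 u → (∀ x, ‖u x‖ ≤ 1) → 4 ≤ lam → 0 ≤ c →
    1 ≤ l → l ≤ 2 →
    lam * l ^ 2 * gExt g ((c + l) / lam) - C * √lam ≤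
      ∫ x in cell a c l, glDensity Avan lam u x := by
  obtain ⟨K, hK, hlocalize⟩ := exists_integral_glDensity_localize_le
  refine ⟨2 * K + 20, by positivity, fun {g} hg {lam a c l u} hu hu₁ hlam hc hl₁ hl₂ => ?_⟩
  have hlam₀ : 0 < lam := by linarith
  have hS : 0 < √lam := Real.sqrt_pos.2 hlam₀
  let v := localize a c l (√lam)⁻¹ u
  have hv : ContDiff ℝ 1 v := contDiff_localize a c l _ hu
  have hs : tsupport v ⊆ cell a c l := tsupport_localize_subset a c l (inv_pos.2 hS) u
  have hcut := hlocalize Avan lam u a c l continuous_Avan hu hu₁ hl₁ hlam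
  have hlin := sub_le_integral_glDensity_Avan hv
    (fun x => (norm_localize_le a c l _ u x).trans (hu₁ x)) hs hlam₀ (by linarith) hl₂
  have htile := hg.mul_gExt_le_integral_glDensity_linPotential (by linarith)
    (show 0 < c + l by linarith) hlam₀ hv hs
  have hnonpos : lam * l ^ 2 * gExt g ((c + l) / lam) ≤ 0 :=
    mul_nonpos_of_nonneg_of_nonpos (by positivity) (hg.gExt_nonpos _)
  have hε : (√lam)⁻¹ ≤ 1 := inv_le_one_of_one_le₀ (by linarith [two_le_sqrt hlam])
  have hshrink : lam * l ^ 2 * gExt g ((c + l) / lam) ≤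
      (1 - (√lam)⁻¹) * ∫ x, glDensity (linPotential (c + l)) lam v x := by
    nlinarith [mul_le_mul_of_nonneg_left htile (sub_nonneg.2 hε), inv_pos.2 hS]
  have hside : K * l * √lam ≤ K * 2 * √lam := by gcongr
  linarith

end ExtendedG

/-! ### The Neumann problem in a strong field -/

lemma sq_norm_setIntegral_Ioc_zero_one_le {E : Type*} [NormedAddCommGroup E] [NormedSpace ℝ E]
    [CompleteSpace E] {f : ℝ → E} (hf : Continuous f) :
    ‖∫ t in Ioc (0 : ℝ) 1, f t‖ ^ 2 ≤ ∫ t in Ioc (0 : ℝ) 1, ‖f t‖ ^ 2 := by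
  have : IsProbabilityMeasure (volume.restrict (Ioc (0 : ℝ) 1)) := ⟨by simp⟩
  have hconvex : ConvexOn ℝ univ fun v : E => ‖v‖ ^ 2 :=
    convexOn_univ_norm.pow (fun v _ => norm_nonneg v) 2
  exact hconvex.map_integral_le (by fun_prop) isClosed_univ (by simp) hf.integrableOn_Ioc
    (hf.norm.pow 2).integrableOn_Ioc

lemma sq_norm_sub_le_integral_fderiv {E F : Type*} [NormedAddCommGroup E] [NormedSpace ℝ E]
    [NormedAddCommGroup F] [NormedSpace ℝ F] [CompleteSpace F] {w : E → F} (hw : ContDiff ℝ 1 w)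
    (p v : E) : ‖w (p + v) - w p‖ ^ 2 ≤ ∫ t in Ioc (0 : ℝ) 1, ‖fderiv ℝ w (p + t • v) v‖ ^ 2 := by
  have hcont : Continuous fun t : ℝ => fderiv ℝ w (p + t • v) v := by fun_prop (disch := simp)
  have hderiv (t : ℝ) : HasDerivAt (fun t : ℝ => w (p + t • v)) (fderiv ℝ w (p + t • v) v) t := by
    have hline : HasDerivAt (fun t : ℝ => p + t • v) v t := by
      simpa using ((hasDerivAt_id t).smul_const v).const_add p
    exact (hw.differentiable one_ne_zero _).hasFDerivAt.comp_hasDerivAt t hline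
  have hftc : ∫ t in Ioc (0 : ℝ) 1, fderiv ℝ w (p + t • v) v = w (p + v) - w p := by
    rw [← intervalIntegral.integral_of_le zero_le_one,
      intervalIntegral.integral_eq_sub_of_hasDerivAt (fun t _ => hderiv t)
        (hcont.intervalIntegrable _ _), one_smul, zero_smul, add_zero]
  rw [← hftc]
  exact sq_norm_setIntegral_Ioc_zero_one_le hcont

lemma setIntegral_cell_comp_add (f : ℝ × ℝ → ℝ) (a c m : ℝ) (q : ℝ × ℝ) :
    ∫ p in cell a c m, f (p + q) = ∫ x in cell (a + q.1) (c + q.2) m, f x := by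
  rw [← (measurePreserving_add_right volume q).setIntegral_preimage_emb
    (measurableEmbedding_addRight q) f]
  congr 2
  ext p
  simp only [cell, mem_preimage, mem_prod, mem_Ioo, Prod.fst_add, Prod.snd_add, add_right_comm,
    add_lt_add_iff_right]

lemma setIntegral_sq_norm_sub_le {w : ℝ × ℝ → ℂ} (hw : ContDiff ℝ 1 w) {a c m a' c' l : ℝ}
    {v : ℝ × ℝ} (hv : ∀ t ∈ Ioc (0 : ℝ) 1, cell (a + t * v.1) (c + t * v.2) m ⊆ cell a' c' l) :
    ∫ p in cell a c m, ‖w (p + v) - w p‖ ^ 2 ≤ ∫ x in cell a' c' l, ‖fderiv ℝ w x v‖ ^ 2 := by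
  let f : ℝ × ℝ → ℝ := fun x => ‖fderiv ℝ w x v‖ ^ 2
  have hf : Continuous f := by fun_prop (disch := simp)
  have hfi : Integrable (Function.uncurry fun (p : ℝ × ℝ) (t : ℝ) => f (p + t • v))
      ((volume.restrict (cell a c m)).prod (volume.restrict (Ioc 0 1))) := by
    rw [Measure.prod_restrict]
    have hcont : Continuous fun z : (ℝ × ℝ) × ℝ => f (z.1 + z.2 • v) := hf.comp (by fun_prop)
    exact (hcont.continuousOn.integrableOn_compact
      (μ := (volume : Measure (ℝ × ℝ)).prod volume) (isCompact_Icc.prod isCompact_Icc)).mono_set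
      (prod_mono (cell_subset_Icc a c m) Ioc_subset_Icc_self)
  calc ∫ p in cell a c m, ‖w (p + v) - w p‖ ^ 2
      ≤ ∫ p in cell a c m, ∫ t in Ioc (0 : ℝ) 1, f (p + t • v) := by
        have := hw.continuous
        exact integral_mono (integrableOn_cell (by fun_prop) a c m) hfi.integral_prod_left
          fun p => sq_norm_sub_le_integral_fderiv hw p v
    _ = ∫ t in Ioc (0 : ℝ) 1, ∫ p in cell a c m, f (p + t • v) := integral_integral_swap hfi
    _ ≤ ∫ _t in Ioc (0 : ℝ) 1, ∫ x in cell a' c' l, f x := by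
        refine setIntegral_mono_on hfi.integral_prod_right (integrableOn_const (by simp))
          measurableSet_Ioc fun t ht => ?_
        rw [setIntegral_cell_comp_add]
        exact setIntegral_mono_set (integrableOn_cell hf a' c' l)
          (Eventually.of_forall fun x => sq_nonneg _) (hv t ht).eventuallyLE
    _ = ∫ x in cell a' c' l, f x := by simp

lemma setIntegral_union_le {α : Type*} [MeasurableSpace α] {μ : Measure α} {f : α → ℝ}
    {s t : Set α} (hf : 0 ≤ f) (hs : IntegrableOn f s μ) (ht : IntegrableOn f t μ) :
    ∫ x in s ∪ t, f x ∂μ ≤ (∫ x in s, f x ∂μ) + ∫ x in t, f x ∂μ := by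
  rw [← integral_add_measure hs ht]
  exact integral_mono_measure (Measure.restrict_union_le s t) (Eventually.of_forall hf)
    (Integrable.add_measure hs ht)

lemma cell_subset_union_corners (a c : ℝ) {l s : ℝ} (hsl : 2 * s < l) :
    cell a c l ⊆ (cell a c (l - s) ∪ cell (a + s) c (l - s)) ∪
      (cell a (c + s) (l - s) ∪ cell (a + s) (c + s) (l - s)) := by
  rintro x ⟨⟨ha, hal⟩, hc, hcl⟩
  simp only [cell, mem_union, mem_prod, mem_Ioo]
  grind

lemma setIntegral_cell_le_corners {f : ℝ × ℝ → ℝ} (hf : Continuous f) (hf₀ : 0 ≤ f) (a c : ℝ)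
    {l s : ℝ} (hsl : 2 * s < l) :
    ∫ x in cell a c l, f x ≤ ∫ p in cell a c (l - s),
      (f p + f (p + (s, 0)) + (f (p + (0, s)) + f (p + (s, s)))) := by
  have hfi (a' c' : ℝ) := integrableOn_cell hf a' c' (l - s)
  have hfi' (q : ℝ × ℝ) : IntegrableOn (fun p => f (p + q)) (cell a c (l - s)) :=
    integrableOn_cell (by fun_prop) _ _ _
  calc ∫ x in cell a c l, f x
      ≤ ∫ x in (cell a c (l - s) ∪ cell (a + s) c (l - s)) ∪
          (cell a (c + s) (l - s) ∪ cell (a + s) (c + s) (l - s)), f x :=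
        setIntegral_mono_set (((hfi _ _).union (hfi _ _)).union ((hfi _ _).union (hfi _ _)))
          (Eventually.of_forall hf₀) (cell_subset_union_corners a c hsl).eventuallyLE
    _ ≤ ((∫ x in cell a c (l - s), f x) + ∫ x in cell (a + s) c (l - s), f x) +
          ((∫ x in cell a (c + s) (l - s), f x) + ∫ x in cell (a + s) (c + s) (l - s), f x) :=
        (setIntegral_union_le hf₀ ((hfi _ _).union (hfi _ _))
          ((hfi _ _).union (hfi _ _))).trans (add_le_add
            (setIntegral_union_le hf₀ (hfi _ _) (hfi _ _))
            (setIntegral_union_le hf₀ (hfi _ _) (hfi _ _)))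
    _ = _ := by
        rw [integral_add (integrableOn_cell (by fun_prop) _ _ _)
          (integrableOn_cell (by fun_prop) _ _ _), integral_add (hfi _ _) (hfi' _),
          integral_add (hfi' _) (hfi' _)]
        simp only [setIntegral_cell_comp_add, add_zero]

lemma sq_norm_exp_sub_exp (α β : ℝ) :
    ‖Complex.exp (β * Complex.I) - Complex.exp (α * Complex.I)‖ ^ 2 = 2 - 2 * cos (β - α) := by
  rw [Complex.sq_norm, Complex.normSq_apply, cos_sub]
  simp only [Complex.sub_re, Complex.sub_im, Complex.exp_ofReal_mul_I_re,
    Complex.exp_ofReal_mul_I_im]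
  linear_combination sin_sq_add_cos_sq α + sin_sq_add_cos_sq β

lemma sq_norm_le_two_mul {E : Type*} [SeminormedAddCommGroup E] (x y : E) :
    ‖x‖ ^ 2 ≤ 2 * (‖y‖ ^ 2 + ‖x - y‖ ^ 2) :=
  (pow_le_pow_left₀ (norm_nonneg x) (norm_le_norm_add_norm_sub' x y) 2).trans add_sq_le

-- Going round the loop of the four corners multiplies `z₁₁` by `exp (i(β - α))`, up to the
-- differences along the edges; hence these control `z₁₁`, and then all corners, unless the flux
-- `β - α` is close to a multiple of `2π`.
lemma sum_sq_norm_corners_le (z₀₀ z₁₀ z₀₁ z₁₁ : ℂ) {α β : ℝ} (h : cos (β - α) ≤ 5 / 9) :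
    ‖z₀₀‖ ^ 2 + ‖z₁₀‖ ^ 2 + (‖z₀₁‖ ^ 2 + ‖z₁₁‖ ^ 2) ≤
      51 * (‖Complex.exp (α * Complex.I) * z₁₀ - z₀₀‖ ^ 2 +
        ‖Complex.exp (β * Complex.I) * z₁₁ - z₀₁‖ ^ 2 + (‖z₀₁ - z₀₀‖ ^ 2 + ‖z₁₁ - z₁₀‖ ^ 2)) := by
  set eα := Complex.exp (α * Complex.I)
  set eβ := Complex.exp (β * Complex.I)
  have hα : ‖eα‖ = 1 := Complex.norm_exp_ofReal_mul_I α
  have hβ : ‖eβ‖ = 1 := Complex.norm_exp_ofReal_mul_I β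
  have hflux : 8 / 9 ≤ ‖eβ - eα‖ ^ 2 := by
    rw [sq_norm_exp_sub_exp]
    linarith
  have hloop : ‖eβ - eα‖ * ‖z₁₁‖ ≤
      ‖eβ * z₁₁ - z₀₁‖ + ‖z₀₁ - z₀₀‖ + (‖eα * z₁₀ - z₀₀‖ + ‖z₁₁ - z₁₀‖) := by
    calc ‖eβ - eα‖ * ‖z₁₁‖ = ‖eβ * z₁₁ - z₀₁ + (z₀₁ - z₀₀) -
          (eα * z₁₀ - z₀₀ + eα * (z₁₁ - z₁₀))‖ := by
            rw [← norm_mul]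
            ring_nf
      _ ≤ ‖eβ * z₁₁ - z₀₁‖ + ‖z₀₁ - z₀₀‖ + (‖eα * z₁₀ - z₀₀‖ + ‖eα * (z₁₁ - z₁₀)‖) :=
            (norm_sub_le _ _).trans (add_le_add (norm_add_le _ _) (norm_add_le _ _))
      _ = _ := by rw [norm_mul eα, hα, one_mul]
  have h₁₁ : 8 / 9 * ‖z₁₁‖ ^ 2 ≤ 4 * (‖eβ * z₁₁ - z₀₁‖ ^ 2 + ‖z₀₁ - z₀₀‖ ^ 2 +
      (‖eα * z₁₀ - z₀₀‖ ^ 2 + ‖z₁₁ - z₁₀‖ ^ 2)) := by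
    calc 8 / 9 * ‖z₁₁‖ ^ 2 ≤ (‖eβ - eα‖ * ‖z₁₁‖) ^ 2 := by rw [mul_pow]; gcongr
      _ ≤ _ := pow_le_pow_left₀ (by positivity) hloop 2
      _ ≤ 2 * ((‖eβ * z₁₁ - z₀₁‖ + ‖z₀₁ - z₀₀‖) ^ 2 +
          (‖eα * z₁₀ - z₀₀‖ + ‖z₁₁ - z₁₀‖) ^ 2) := add_sq_le
      _ ≤ 2 * (2 * (‖eβ * z₁₁ - z₀₁‖ ^ 2 + ‖z₀₁ - z₀₀‖ ^ 2) +
          2 * (‖eα * z₁₀ - z₀₀‖ ^ 2 + ‖z₁₁ - z₁₀‖ ^ 2)) := by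
            gcongr <;> exact add_sq_le
      _ = _ := by ring
  have h₁₀ := sq_norm_le_two_mul z₁₀ z₁₁
  have h₀₁ := sq_norm_le_two_mul z₀₁ (eβ * z₁₁)
  have h₀₀ := sq_norm_le_two_mul z₀₀ z₀₁
  rw [norm_sub_rev] at h₁₀ h₀₁ h₀₀
  rw [norm_mul, hβ, one_mul] at h₀₁
  linarith [sq_nonneg ‖eα * z₁₀ - z₀₀‖, sq_nonneg ‖eβ * z₁₁ - z₀₁‖, sq_nonneg ‖z₀₁ - z₀₀‖,
    sq_nonneg ‖z₁₁ - z₁₀‖]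

section Straighten

variable {u : ℝ × ℝ → ℂ}

/-- The gauge transform of `u` in which the covariant derivative of `Avan` along the first axis is
the plain derivative. -/
def straighten (u : ℝ × ℝ → ℂ) : ℝ × ℝ → ℂ := transplant (fun x => x.1 * x.2 ^ 2 / 2) 0 1 u

lemma contDiff_straighten (hu : ContDiff ℝ 1 u) : ContDiff ℝ 1 (straighten u) :=
  contDiff_transplant (by fun_prop) 0 1 hu

lemma norm_fderiv_straighten (hu : Differentiable ℝ u) (x : ℝ × ℝ) :
    ‖fderiv ℝ (straighten u) x (1, 0)‖ = ‖covDeriv Avan u x (1, 0)‖ := by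
  have hφ := ((hasFDerivAt_fst (𝕜 := ℝ) (p := x)).fun_mul
    ((hasFDerivAt_snd (𝕜 := ℝ) (p := x)).pow 2)).mul_const (2 : ℝ)⁻¹
  have h := covDeriv_transplant (A := Avan) (A' := 0) (p := 0) (s := 1) (e := (1, 0)) hφ (hu _)
    (by
      simp only [Pi.zero_apply, Prod.fst_zero, Prod.snd_zero, mul_one, mul_zero, add_zero, Avan,
        one_smul, zero_add, one_mul, nsmul_eq_mul, Nat.cast_ofNat, smul_add, add_apply, smul_apply,
        Nat.add_one_sub_one, pow_one, smul_eq_mul, ContinuousLinearMap.coe_fst',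
        ContinuousLinearMap.coe_snd']
      ring)
  have := congr_arg norm h
  rw [norm_mul, Complex.norm_exp_ofReal_mul_I] at this
  simpa [covDeriv, straighten, div_eq_mul_inv] using this

lemma norm_straighten_add_sub (u : ℝ × ℝ → ℂ) (s : ℝ) (p : ℝ × ℝ) :
    ‖straighten u (p + (s, 0)) - straighten u p‖ =
      ‖Complex.exp ((s * p.2 ^ 2 / 2 : ℝ) * Complex.I) * u (p + (s, 0)) - u p‖ := by
  have hphase : (((p + (s, 0)).1 * (p + (s, 0)).2 ^ 2 / 2 : ℝ) : ℂ) * Complex.I =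
      (p.1 * p.2 ^ 2 / 2 : ℝ) * Complex.I + (s * p.2 ^ 2 / 2 : ℝ) * Complex.I := by
    simp only [Prod.fst_add, Prod.snd_add, add_zero, Complex.ofReal_div, Complex.ofReal_mul,
      Complex.ofReal_add, Complex.ofReal_pow]
    ring
  simp only [straighten, transplant, hphase, one_smul, zero_add, Complex.exp_add]
  rw [mul_assoc, ← mul_sub, norm_mul, Complex.norm_exp_ofReal_mul_I, one_mul]

lemma setIntegral_magGradSq_Avan (hu : ContDiff ℝ 1 u) (a c l : ℝ) :
    ∫ x in cell a c l, magGradSq Avan u x =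
      (∫ x in cell a c l, ‖fderiv ℝ (straighten u) x (1, 0)‖ ^ 2) +
        ∫ x in cell a c l, ‖fderiv ℝ u x (0, 1)‖ ^ 2 := by
  have := contDiff_straighten hu
  rw [← integral_add (integrableOn_cell (by fun_prop (disch := simp)) a c l)
    (integrableOn_cell (by fun_prop (disch := simp)) a c l)]
  simp only [norm_fderiv_straighten (hu.differentiable one_ne_zero), magGradSq_eq_covDeriv]
  simp [covDeriv, Avan]

end Straighten

section StrongField

variable {a c l s : ℝ} {u : ℝ × ℝ → ℂ}

lemma sum_sq_norm_corners_le_straighten (u : ℝ × ℝ → ℂ) (hs : 0 ≤ s) (hsc : s ^ 2 * c = 1)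
    (hc : 3 ≤ c) {p : ℝ × ℝ} (hp : p.2 ∈ Icc c (c + 2)) :
    ‖u p‖ ^ 2 + ‖u (p + (s, 0))‖ ^ 2 + (‖u (p + (0, s))‖ ^ 2 + ‖u (p + (s, s))‖ ^ 2) ≤
      51 * (‖straighten u (p + (s, 0)) - straighten u p‖ ^ 2 +
        ‖straighten u (p + (0, s) + (s, 0)) - straighten u (p + (0, s))‖ ^ 2 +
        (‖u (p + (0, s)) - u p‖ ^ 2 + ‖u (p + (s, 0) + (0, s)) - u (p + (s, 0))‖ ^ 2)) := by
  have hs₁ : s ≤ 1 := by nlinarith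
  have hflux : s * (p.2 + s) ^ 2 / 2 - s * p.2 ^ 2 / 2 = s ^ 2 * (p.2 + s / 2) := by ring
  have hflux₁ : 1 ≤ s ^ 2 * (p.2 + s / 2) := by
    rw [← hsc]
    gcongr
    linarith [hp.1]
  have hflux₂ : s ^ 2 * (p.2 + s / 2) ≤ 2 := by
    calc s ^ 2 * (p.2 + s / 2) ≤ s ^ 2 * (2 * c) := by gcongr; linarith [hp.2]
      _ = 2 := by linear_combination 2 * hsc
  have hcos : cos (s * (p.2 + s) ^ 2 / 2 - s * p.2 ^ 2 / 2) ≤ 5 / 9 := by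
    rw [hflux]
    exact (cos_le_cos_of_nonneg_of_le_pi zero_le_one (hflux₂.trans two_le_pi) hflux₁).trans
      cos_one_le
  have hcorner : p + (0, s) + (s, 0) = p + (s, s) := by simp [add_assoc]
  have hcorner' : p + (s, 0) + (0, s) = p + (s, s) := by simp [add_assoc]
  rw [norm_straighten_add_sub, norm_straighten_add_sub, hcorner, hcorner']
  exact sum_sq_norm_corners_le _ _ _ _ hcos

lemma setIntegral_sq_norm_edge_le {w : ℝ × ℝ → ℂ} (hw : ContDiff ℝ 1 w) (a c l : ℝ) (hs : 0 ≤ s)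
    {q e : ℝ × ℝ} (hq : 0 ≤ q) (he : 0 ≤ e) (hqe : q + s • e ≤ (s, s)) :
    ∫ p in cell a c (l - s), ‖w (p + q + s • e) - w (p + q)‖ ^ 2 ≤
      s ^ 2 * ∫ x in cell a c l, ‖fderiv ℝ w x e‖ ^ 2 := by
  rw [setIntegral_cell_comp_add fun x => ‖w (x + s • e) - w x‖ ^ 2, ← integral_const_mul]
  have hnorm (x : ℝ × ℝ) : s ^ 2 * ‖fderiv ℝ w x e‖ ^ 2 = ‖fderiv ℝ w x (s • e)‖ ^ 2 := by
    rw [map_smul, norm_smul, mul_pow, Real.norm_eq_abs, sq_abs]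
  simp only [hnorm]
  refine setIntegral_sq_norm_sub_le hw fun t ht => ?_
  have hbox {x y : ℝ} (hx : 0 ≤ x) (hy : 0 ≤ y) (hxy : x + s * y ≤ s) :
      0 ≤ x + t * (s * y) ∧ x + t * (s * y) ≤ s :=
    ⟨add_nonneg hx (mul_nonneg ht.1.le (mul_nonneg hs hy)),
      hxy.trans' (add_le_add_right (mul_le_of_le_one_left (mul_nonneg hs hy) ht.2) x)⟩
  have h₁ := hbox hq.1 he.1 hqe.1
  have h₂ := hbox hq.2 he.2 hqe.2
  simp only [Prod.smul_fst, Prod.smul_snd, smul_eq_mul]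
  exact prod_mono (Ioo_subset_Ioo (by linarith) (by linarith))
    (Ioo_subset_Ioo (by linarith) (by linarith))

-- Average the corner estimate over squares of side `s = c^(-1/2)`: the flux through them is of
-- order one.
lemma setIntegral_sq_norm_le_magGradSq (hu : ContDiff ℝ 1 u) (a : ℝ) (hc : 5 ≤ c) (hl₁ : 1 ≤ l)
    (hl₂ : l ≤ 2) :
    ∫ x in cell a c l, ‖u x‖ ^ 2 ≤ 102 / c * ∫ x in cell a c l, magGradSq Avan u x := by
  have hc₀ : 0 < c := by linarith
  let s := √(1 / c)
  have hs : 0 ≤ s := Real.sqrt_nonneg _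
  have hs₂ : s ^ 2 = 1 / c := Real.sq_sqrt (by positivity)
  have hsc : s ^ 2 * c = 1 := by rw [hs₂, one_div_mul_cancel hc₀.ne']
  have hsl : 2 * s < l := by nlinarith
  have hst := contDiff_straighten hu
  have := hu.continuous
  have := hst.continuous
  have hfi {f : ℝ × ℝ → ℝ} (hf : Continuous f) := integrableOn_cell hf a c (l - s)
  have edge₁ := setIntegral_sq_norm_edge_le hst a c l hs (q := 0) (e := (1, 0)) le_rfl
    ⟨zero_le_one, le_rfl⟩ (by simpa using hs)
  have edge₂ := setIntegral_sq_norm_edge_le hst a c l hs (q := (0, s)) (e := (1, 0))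
    ⟨le_rfl, hs⟩ ⟨zero_le_one, le_rfl⟩ (by simp)
  have edge₃ := setIntegral_sq_norm_edge_le hu a c l hs (q := 0) (e := (0, 1)) le_rfl
    ⟨le_rfl, zero_le_one⟩ (by simpa using hs)
  have edge₄ := setIntegral_sq_norm_edge_le hu a c l hs (q := (s, 0)) (e := (0, 1))
    ⟨hs, le_rfl⟩ ⟨le_rfl, zero_le_one⟩ (by simp)
  simp only [add_zero, Prod.smul_mk, smul_eq_mul, mul_one, mul_zero] at edge₁ edge₂ edge₃ edge₄
  refine (setIntegral_cell_le_corners (by fun_prop) (fun x => sq_nonneg ‖u x‖) a c hsl).trans <|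
    (setIntegral_mono_on (hfi (by fun_prop)) (hfi (by fun_prop)) (measurableSet_cell _ _ _)
      fun p hp => sum_sq_norm_corners_le_straighten u hs hsc (by linarith)
        ⟨hp.2.1.le, hp.2.2.le.trans (by linarith)⟩).trans ?_
  rw [integral_const_mul, integral_add (hfi (by fun_prop)) (hfi (by fun_prop)),
    integral_add (hfi (by fun_prop)) (hfi (by fun_prop)),
    integral_add (hfi (by fun_prop)) (hfi (by fun_prop)), setIntegral_magGradSq_Avan hu,
    div_eq_mul_one_div, ← hs₂]
  linarith

lemma setIntegral_cell_glDensity_Avan_nonneg (hu : ContDiff ℝ 1 u) (a : ℝ) {lam : ℝ}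
    (hlam : 1 ≤ lam) (hc : 102 * lam ≤ c) (hl₁ : 1 ≤ l) (hl₂ : l ≤ 2) :
    0 ≤ ∫ x in cell a c l, glDensity Avan lam u x := by
  have hc₀ : 0 < c := by linarith
  have hneumann := setIntegral_sq_norm_le_magGradSq hu a (by linarith : 5 ≤ c) hl₁ hl₂
  have hgrad : 0 ≤ ∫ x in cell a c l, magGradSq Avan u x :=
    integral_nonneg fun x => magGradSq_nonneg _ _ _
  have hintgrad := integrableOn_cell (continuous_magGradSq continuous_Avan hu) a c l
  have := hu.continuous
  have hintmass : IntegrableOn (fun x => lam * ‖u x‖ ^ 2) (cell a c l) :=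
    integrableOn_cell (by fun_prop) a c l
  calc 0 ≤ (1 - lam * (102 / c)) * ∫ x in cell a c l, magGradSq Avan u x := by
        refine mul_nonneg (sub_nonneg.2 ?_) hgrad
        rw [← mul_div_assoc, div_le_one hc₀]
        linarith
    _ ≤ (∫ x in cell a c l, magGradSq Avan u x) - lam * ∫ x in cell a c l, ‖u x‖ ^ 2 := by
        linarith [mul_le_mul_of_nonneg_left hneumann (by linarith : 0 ≤ lam)]
    _ = ∫ x in cell a c l, (magGradSq Avan u x - lam * ‖u x‖ ^ 2) := by
        rw [integral_sub hintgrad hintmass, integral_const_mul]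
    _ ≤ ∫ x in cell a c l, glDensity Avan lam u x :=
        integral_mono (hintgrad.sub hintmass)
          (integrableOn_cell (continuous_glDensity continuous_Avan lam hu) a c l) fun x => by
            have : 0 ≤ lam / 2 * ‖u x‖ ^ 4 := by positivity
            simp only [glDensity]
            linarith

end StrongField

/-! ### Summation over the half-strip -/

lemma Ioc_prod_Ioc_ae_eq_cell (a c l : ℝ) :
    (Ioc a (a + l) ×ˢ Ioc c (c + l) : Set (ℝ × ℝ)) =ᵐ[volume] cell a c l := by
  rw [cell, Measure.volume_eq_prod]
  exact Measure.set_prod_ae_eq Ioo_ae_eq_Ioc.symm Ioo_ae_eq_Ioc.symm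

lemma biUnion_range_Ioc_add_natCast_mul (a : ℝ) {l : ℝ} (hl : 0 ≤ l) (n : ℕ) :
    ⋃ i ∈ Finset.range n, Ioc (a + i * l) (a + i * l + l) = Ioc a (a + n * l) := by
  have hunion := (monotone_add_natCast_mul a hl).biUnion_Ico_Ioc_map_succ 0 n
  simp only [Order.succ_eq_add_one, Nat.cast_add_one, Nat.cast_zero, zero_mul,
    add_zero] at hunion
  rw [← hunion]
  simp [add_mul, add_assoc]

lemma biUnion_cell_grid_ae_eq (a c : ℝ) {l : ℝ} (hl : 0 ≤ l) (N n : ℕ) :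
    (⋃ k ∈ Finset.range N ×ˢ Finset.range n, cell (a + k.1 * l) (c + k.2 * l) l : Set (ℝ × ℝ))
      =ᵐ[volume] Ioc a (a + N * l) ×ˢ Ioc c (c + n * l) := by
  have hcover : Ioc a (a + N * l) ×ˢ Ioc c (c + n * l) =
      ⋃ k ∈ Finset.range N ×ˢ Finset.range n,
        Ioc (a + k.1 * l) (a + k.1 * l + l) ×ˢ Ioc (c + k.2 * l) (c + k.2 * l + l) := by
    rw [← biUnion_range_Ioc_add_natCast_mul a hl, ← biUnion_range_Ioc_add_natCast_mul c hl]
    ext x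
    simp only [mem_prod, mem_iUnion₂, Finset.mem_product, exists_prop]
    constructor
    · rintro ⟨⟨i, hi, hxi⟩, j, hj, hxj⟩
      exact ⟨(i, j), ⟨hi, hj⟩, hxi, hxj⟩
    · rintro ⟨⟨i, j⟩, ⟨hi, hj⟩, hxi, hxj⟩
      exact ⟨⟨i, hi, hxi⟩, j, hj, hxj⟩
  rw [hcover]
  exact Filter.EventuallyEq.countable_bUnion (Finset.range N ×ˢ Finset.range n).countable_toSet
    fun k _ => (Ioc_prod_Ioc_ae_eq_cell _ _ l).symm

lemma setIntegral_Ioc_prod_Ioc_eq_sum_cell {f : ℝ × ℝ → ℝ} (hf : Continuous f) (a c : ℝ) {l : ℝ}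
    (hl : 0 ≤ l) (N n : ℕ) :
    ∫ x in Ioc a (a + N * l) ×ˢ Ioc c (c + n * l), f x =
      ∑ k ∈ Finset.range N ×ˢ Finset.range n, ∫ x in cell (a + k.1 * l) (c + k.2 * l) l, f x := by
  rw [← setIntegral_congr_set (biUnion_cell_grid_ae_eq a c hl N n)]
  exact integral_biUnion_finset _ (fun k _ => measurableSet_cell _ _ l)
    (fun k _ k' _ hk => disjoint_cell_grid a c hl hk) fun k _ => integrableOn_cell hf _ _ l

section RiemannSum

variable {g : ℝ → ℝ}

lemma integral_gExt_zero_one : ∫ b in (0 : ℝ)..1, gExt g b = ∫ b in (0 : ℝ)..1, g b := by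
  simp only [intervalIntegral.integral_of_le zero_le_one, integral_Ioc_eq_integral_Ioo]
  exact setIntegral_congr_fun measurableSet_Ioo fun b hb => gExt_of_mem_Ioo hb

lemma IsLimitG.intervalIntegrable_gExt (hg : IsLimitG g) (x y : ℝ) :
    IntervalIntegrable (gExt g) volume x y :=
  hg.gExt_monotone.intervalIntegrable

lemma IsLimitG.integral_le_integral_gExt (hg : IsLimitG g) {x y : ℝ} (hx : 0 ≤ x) (hxy : x ≤ y) :
    ∫ b in (0 : ℝ)..1, g b ≤ ∫ b in x..y, gExt g b := by
  have htail : ∫ b in (1 : ℝ)..max y 1, gExt g b = 0 := by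
    rw [intervalIntegral.integral_congr fun b hb => gExt_of_one_le (g := g)
      (uIcc_of_le (le_max_right y 1) ▸ hb).1, intervalIntegral.integral_zero]
  have hmono : ∫ b in x..y, -gExt g b ≤ ∫ b in (0 : ℝ)..max y 1, -gExt g b :=
    intervalIntegral.integral_mono_interval hx hxy (le_max_left y 1)
      (Eventually.of_forall fun b => neg_nonneg.2 (hg.gExt_nonpos b))
      (hg.intervalIntegrable_gExt _ _).neg
  simp only [intervalIntegral.integral_neg, neg_le_neg_iff] at hmono
  calc ∫ b in (0 : ℝ)..1, g b
      = (∫ b in (0 : ℝ)..1, gExt g b) + ∫ b in (1 : ℝ)..max y 1, gExt g b := by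
        rw [integral_gExt_zero_one, htail, add_zero]
    _ = ∫ b in (0 : ℝ)..max y 1, gExt g b :=
        intervalIntegral.integral_add_adjacent_intervals (hg.intervalIntegrable_gExt _ _)
          (hg.intervalIntegrable_gExt _ _)
    _ ≤ ∫ b in x..y, gExt g b := hmono

lemma IsLimitG.integral_nonpos (hg : IsLimitG g) : ∫ b in (0 : ℝ)..1, g b ≤ 0 := by
  simpa using hg.integral_le_integral_gExt le_rfl le_rfl

lemma IsLimitG.mul_integral_le_mul_sum_gExt (hg : IsLimitG g) {A l lam : ℝ} (hA : 0 ≤ A)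
    (hl : 0 < l) (hlam : 0 < lam) (n : ℕ) :
    lam * ∫ b in (0 : ℝ)..1, g b ≤
      l * ∑ j ∈ Finset.range n, gExt g ((A + j * l + l) / lam) := by
  let f : ℝ → ℝ := fun t => gExt g (A / lam + l / lam * t)
  have hf : Monotone f := fun s t hst => hg.gExt_monotone (by gcongr)
  have hsum : ∫ t in (0 : ℝ)..0 + n, f t ≤ ∑ j ∈ Finset.range n, f (0 + (j + 1 : ℕ)) :=
    (hf.monotoneOn _).integral_le_sum
  have hsubst : l / lam * ∫ t in (0 : ℝ)..0 + n, f t =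
      ∫ b in A / lam + l / lam * 0..A / lam + l / lam * (0 + n), gExt g b :=
    intervalIntegral.smul_integral_comp_add_mul (gExt g) (l / lam) (A / lam)
  calc lam * ∫ b in (0 : ℝ)..1, g b
      ≤ lam * (l / lam * ∫ t in (0 : ℝ)..0 + n, f t) := by
        rw [hsubst]
        gcongr
        exact hg.integral_le_integral_gExt (by positivity) (by gcongr; positivity)
    _ = l * ∫ t in (0 : ℝ)..0 + n, f t := by field_simp
    _ ≤ l * ∑ j ∈ Finset.range n, f (0 + (j + 1 : ℕ)) := by gcongr
    _ = l * ∑ j ∈ Finset.range n, gExt g ((A + j * l + l) / lam) := by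
        congr! 2 with j
        exact congrArg (gExt g) (by push_cast; ring)

end RiemannSum

lemma card_filter_add_mul_lt_le {A l b : ℝ} (hA : 0 ≤ A) (hl : 1 ≤ l) (n : ℕ) (hb : 0 ≤ b) :
    ((Finset.range n).filter fun j : ℕ => A + j * l < b).card ≤ b + 1 := by
  have hsub : (Finset.range n).filter (fun j : ℕ => A + j * l < b) ⊆ Finset.range ⌈b⌉₊ := by
    intro j hj
    rw [Finset.mem_range, Nat.lt_ceil]
    nlinarith [(Finset.mem_filter.1 hj).2, Nat.cast_nonneg (α := ℝ) j]
  calc (((Finset.range n).filter fun j : ℕ => A + j * l < b).card : ℝ)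
      ≤ ⌈b⌉₊ := by exact_mod_cast (Finset.card_le_card hsub).trans_eq (Finset.card_range _)
    _ ≤ b + 1 := (Nat.ceil_lt_add_one hb).le

lemma exists_le_setIntegral_cell_glDensity_Avan_ite : ∃ C > 0, ∀ {g}, IsLimitG g →
    ∀ {lam a c l : ℝ} {u : ℝ × ℝ → ℂ}, ContDiff ℝ 1 u → (∀ x, ‖u x‖ ≤ 1) → 4 ≤ lam → 0 ≤ c →
    1 ≤ l → l ≤ 2 →
    lam * l ^ 2 * gExt g ((c + l) / lam) - (if c < 102 * lam then C * √lam else 0) ≤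
      ∫ x in cell a c l, glDensity Avan lam u x := by
  obtain ⟨C, hC, hlow⟩ := exists_le_setIntegral_cell_glDensity_Avan
  refine ⟨C, hC, fun {g} hg {lam a c l u} hu hu₁ hlam hc hl₁ hl₂ => ?_⟩
  split_ifs with hc'
  · exact hlow hg hu hu₁ hlam hc hl₁ hl₂
  · rw [sub_zero]
    have := mul_nonpos_of_nonneg_of_nonpos (by positivity : 0 ≤ lam * l ^ 2)
      (hg.gExt_nonpos ((c + l) / lam))
    exact this.trans
      (setIntegral_cell_glDensity_Avan_nonneg hu a (by linarith) (not_lt.1 hc') hl₁ hl₂)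

lemma exists_le_setIntegral_Ioc_prod_Ioc_glDensity_Avan : ∃ C > 0, ∀ {g}, IsLimitG g →
    ∀ {A lam a l : ℝ} {u : ℝ × ℝ → ℂ}, ContDiff ℝ 1 u → (∀ x, ‖u x‖ ≤ 1) → 0 ≤ A → 4 ≤ lam →
    1 ≤ l → l ≤ 2 → ∀ N n : ℕ,
    N * l * (lam ^ 2 * (∫ b in (0 : ℝ)..1, g b) - C * (lam * √lam)) ≤
      ∫ x in Ioc a (a + N * l) ×ˢ Ioc A (A + n * l), glDensity Avan lam u x := by
  obtain ⟨C, hC, hcell⟩ := exists_le_setIntegral_cell_glDensity_Avan_ite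
  refine ⟨103 * C, by positivity, fun {g} hg {A lam a l u} hu hu₁ hA hlam hl₁ hl₂ N n => ?_⟩
  have hl₀ : 0 < l := by linarith
  have hriemann := hg.mul_integral_le_mul_sum_gExt hA hl₀ (by linarith : 0 < lam) n
  have hcard := card_filter_add_mul_lt_le hA hl₁ n (by linarith : 0 ≤ 102 * lam)
  have hrows : l * (lam ^ 2 * (∫ b in (0 : ℝ)..1, g b) - 103 * C * (lam * √lam)) ≤
      ∑ j ∈ Finset.range n, (lam * l ^ 2 * gExt g ((A + j * l + l) / lam) -
        if A + j * l < 102 * lam then C * √lam else 0) := by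
    rw [Finset.sum_sub_distrib, ← Finset.mul_sum, ← Finset.sum_filter, Finset.sum_const,
      nsmul_eq_mul]
    have hbulk := mul_le_mul_of_nonneg_left hriemann (by positivity : 0 ≤ lam * l)
    have herror := mul_le_mul_of_nonneg_right (hcard.trans (by linarith : _ ≤ 103 * lam))
      (by positivity : 0 ≤ C * √lam)
    have hlength := mul_le_mul_of_nonneg_right hl₁ (by positivity : 0 ≤ 103 * C * (lam * √lam))
    linarith
  rw [setIntegral_Ioc_prod_Ioc_eq_sum_cell (continuous_glDensity continuous_Avan lam hu) a A hl₀.le,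
    Finset.sum_product, mul_assoc, ← nsmul_eq_mul]
  refine (nsmul_le_nsmul_right hrows N).trans ?_
  rw [← Finset.card_range N, ← Finset.sum_const, Finset.card_range]
  gcongr with i _ j _
  exact hcell hg hu hu₁ hlam (by positivity) hl₁ hl₂

lemma exists_nat_mul_eq_of_one_le {R : ℝ} (hR : 1 ≤ R) :
    ∃ (N : ℕ) (l : ℝ), N * l = R ∧ 1 ≤ l ∧ l ≤ 2 := by
  have hN : (1 : ℝ) ≤ ⌊R⌋₊ := mod_cast (Nat.one_le_floor_iff R).2 hR
  have hle : (⌊R⌋₊ : ℝ) ≤ R := Nat.floor_le (by linarith)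
  have hlt : R < ⌊R⌋₊ + 1 := Nat.lt_floor_add_one R
  refine ⟨⌊R⌋₊, R / ⌊R⌋₊, by field_simp, ?_, ?_⟩
  · rwa [one_le_div (by linarith)]
  · rw [div_le_iff₀ (by linarith)]
    linarith

lemma tendsto_setIntegral_Ioc_prod_Ioc_Ioi {f : ℝ × ℝ → ℝ} {a b A l : ℝ} (hl : 0 < l)
    (hf : IntegrableOn f (Ioc a b ×ˢ Ioi A)) :
    Tendsto (fun n : ℕ => ∫ x in Ioc a b ×ˢ Ioc A (A + n * l), f x) atTop
      (𝓝 (∫ x in Ioc a b ×ˢ Ioi A, f x)) := by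
  have hunion : ⋃ n : ℕ, Ioc a b ×ˢ Ioc A (A + n * l) = Ioc a b ×ˢ Ioi A := by
    rw [← prod_iUnion, iUnion_Ioc_eq_Ioi_self_iff.2 fun y _ => ?_]
    obtain ⟨n, hn⟩ := exists_nat_ge ((y - A) / l)
    exact ⟨n, by linarith [(div_le_iff₀ hl).1 hn]⟩
  rw [← hunion] at hf ⊢
  exact tendsto_setIntegral_of_monotone (fun n => measurableSet_Ioc.prod measurableSet_Ioc)
    (fun m n hmn => prod_mono le_rfl
      (Ioc_subset_Ioc_right (monotone_add_natCast_mul A hl.le hmn))) hf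

lemma exists_le_setIntegral_Ioc_prod_Ioi_glDensity_Avan : ∃ C > 0, ∀ {g}, IsLimitG g →
    ∀ {A lam a R : ℝ} {u : ℝ × ℝ → ℂ}, ContDiff ℝ 1 u → (∀ x, ‖u x‖ ≤ 1) → 0 ≤ A → 4 ≤ lam →
    1 ≤ R → IntegrableOn (glDensity Avan lam u) (Ioc a (a + R) ×ˢ Ioi A) →
    R * (lam ^ 2 * (∫ b in (0 : ℝ)..1, g b) - C * (lam * √lam)) ≤
      ∫ x in Ioc a (a + R) ×ˢ Ioi A, glDensity Avan lam u x := by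
  obtain ⟨C, hC, hrectangle⟩ := exists_le_setIntegral_Ioc_prod_Ioc_glDensity_Avan
  refine ⟨C, hC, fun {g} hg {A lam a R u} hu hu₁ hA hlam hR hui => ?_⟩
  obtain ⟨N, l, rfl, hl₁, hl₂⟩ := exists_nat_mul_eq_of_one_le hR
  exact ge_of_tendsto' (tendsto_setIntegral_Ioc_prod_Ioc_Ioi (by linarith) hui)
    (hrectangle hg hu hu₁ hA hlam hl₁ hl₂ N)

/-! ### The two half-strips -/

/-- The reflection in the zero line of the field of `Avan`; it exchanges the two half-strips. -/
def reflect (x : ℝ × ℝ) : ℝ × ℝ := (x.1, -x.2)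

lemma contDiff_reflect : ContDiff ℝ 1 reflect := by unfold reflect; fun_prop

lemma measurePreserving_reflect : MeasurePreserving reflect volume volume :=
  (MeasurePreserving.id volume).prod (Measure.measurePreserving_neg volume)

lemma measurableEmbedding_reflect : MeasurableEmbedding reflect :=
  ((MeasurableEquiv.refl ℝ).prodCongr (MeasurableEquiv.neg ℝ)).measurableEmbedding

lemma preimage_reflect_prod_Ioi (s : Set ℝ) (A : ℝ) : reflect ⁻¹' (s ×ˢ Iio (-A)) = s ×ˢ Ioi A := by
  ext x
  simp [reflect]

lemma glDensity_Avan_comp_reflect {u : ℝ × ℝ → ℂ} (hu : Differentiable ℝ u) (lam : ℝ) :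
    glDensity Avan lam (u ∘ reflect) = glDensity Avan lam u ∘ reflect := by
  ext x
  have hreflect : HasFDerivAt reflect
      ((ContinuousLinearMap.fst ℝ ℝ ℝ).prod (-ContinuousLinearMap.snd ℝ ℝ ℝ)) x :=
    hasFDerivAt_fst.prodMk hasFDerivAt_snd.neg
  have hfderiv := ((hu (reflect x)).hasFDerivAt.comp x hreflect).fderiv
  have h₁ : fderiv ℝ (u ∘ reflect) x (1, 0) = fderiv ℝ u (reflect x) (1, 0) := by
    rw [hfderiv]
    simp
  have h₂ : fderiv ℝ (u ∘ reflect) x (0, 1) = -fderiv ℝ u (reflect x) (0, 1) := by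
    rw [hfderiv, ← map_neg]
    simp
  unfold glDensity magGradSq
  rw [Function.comp_apply, h₁, h₂]
  simp [Avan, reflect]

lemma Strip_inter_le_abs_ae_eq (R A : ℝ) :
    (Strip R ∩ {x : ℝ × ℝ | A ≤ |x.2|} : Set (ℝ × ℝ)) =ᵐ[volume]
      (Ioc (-R / 2) (-R / 2 + R) ×ˢ Ioi A ∪ Ioc (-R / 2) (-R / 2 + R) ×ˢ Iio (-A) :
        Set (ℝ × ℝ)) := by
  have hset : Strip R ∩ {x : ℝ × ℝ | A ≤ |x.2|} =
      Ioo (-R / 2) (-R / 2 + R) ×ˢ (Ici A ∪ Iic (-A)) := by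
    ext x
    have : -R / 2 + R = R / 2 := by ring
    simp only [Strip, this, mem_inter_iff, mem_prod, mem_univ, and_true, mem_ofPred_eq, mem_union,
      mem_Ici, mem_Iic, le_abs, le_neg]
  rw [hset, ← prod_union, Measure.volume_eq_prod]
  exact Measure.set_prod_ae_eq Ioo_ae_eq_Ioc (Ioi_ae_eq_Ici.symm.union Iio_ae_eq_Iic.symm)

lemma exists_le_setIntegral_Strip_glDensity_Avan : ∃ C > 0, ∀ {g}, IsLimitG g →
    ∀ {A lam R : ℝ} {u : ℝ × ℝ → ℂ}, ContDiff ℝ 1 u → (∀ x, ‖u x‖ ≤ 1) → 0 ≤ A → 4 ≤ lam → 1 ≤ R →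
    IntegrableOn (glDensity Avan lam u) (Strip R ∩ {x | A ≤ |x.2|}) →
    2 * R * (lam ^ 2 * (∫ b in (0 : ℝ)..1, g b) - C * (lam * √lam)) ≤
      ∫ x in Strip R ∩ {x | A ≤ |x.2|}, glDensity Avan lam u x := by
  obtain ⟨C, hC, hhalf⟩ := exists_le_setIntegral_Ioc_prod_Ioi_glDensity_Avan
  refine ⟨C, hC, fun {g} hg {A lam R u} hu hu₁ hA hlam hR hui => ?_⟩
  let I := Ioc (-R / 2) (-R / 2 + R)
  have hdisj : Disjoint (I ×ˢ Ioi A) (I ×ˢ Iio (-A)) :=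
    (Ioi_disjoint_Iio_of_le (by linarith)).set_prod_right I I
  rw [integrableOn_congr_set_ae (Strip_inter_le_abs_ae_eq R A), integrableOn_union] at hui
  rw [setIntegral_congr_set (Strip_inter_le_abs_ae_eq R A),
    setIntegral_union hdisj (measurableSet_Ioc.prod measurableSet_Iio) hui.1 hui.2]
  have hreflect := glDensity_Avan_comp_reflect (hu.differentiable one_ne_zero) lam
  have hupper := hhalf hg hu hu₁ hA hlam hR hui.1
  have hlower : R * (lam ^ 2 * (∫ b in (0 : ℝ)..1, g b) - C * (lam * √lam)) ≤
      ∫ x in I ×ˢ Iio (-A), glDensity Avan lam u x := by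
    rw [← measurePreserving_reflect.setIntegral_preimage_emb measurableEmbedding_reflect,
      preimage_reflect_prod_Ioi]
    have hui' := (measurePreserving_reflect.integrableOn_comp_preimage
      measurableEmbedding_reflect).2 hui.2
    rw [preimage_reflect_prod_Ioi, ← hreflect] at hui'
    simp only [← Function.comp_apply (f := glDensity Avan lam u) (g := reflect), ← hreflect]
    exact hhalf hg (hu.comp contDiff_reflect) (fun x => hu₁ _) hA hlam hR hui'
  linarith

theorem lemma_lower_bound_general : ∃ C > (0 : ℝ), ∀ g : ℝ → ℝ, IsLimitG g → ∀ A ≥ (0 : ℝ),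
    ∀ R ≥ (1 : ℝ), ∀ L : ℝ, 0 < L → L ≤ 1 / 8 → ∀ u : ℝ × ℝ → ℂ, ContDiff ℝ 1 u →
    (∀ x, ‖u x‖ ≤ 1) →
    IntegrableOn (stripDensity L u) (Strip R ∩ {x : ℝ × ℝ | A ≤ |x.2|}) →
    (∫ x in Strip R ∩ {x : ℝ × ℝ | A ≤ |x.2|}, stripDensity L u x) ≥
      2 * R * L ^ (-(4 : ℝ) / 3) * (∫ b in (0 : ℝ)..1, g b) - C * R * L⁻¹ := by
  obtain ⟨C, hC, hstrip⟩ := exists_le_setIntegral_Strip_glDensity_Avan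
  refine ⟨2 * C, by positivity, fun g hg A hA R hR L hL hL₈ u hu hu₁ hui => ?_⟩
  let lam := L ^ (-(2 : ℝ) / 3)
  have hlam : 4 ≤ lam := by
    have := rpow_le_rpow_of_nonpos hL hL₈ (by norm_num : -(2 : ℝ) / 3 ≤ 0)
    rwa [show (1 / 8 : ℝ) = 2 ^ (-3 : ℝ) by norm_num, ← rpow_mul (by norm_num),
      show (2 : ℝ) ^ (-3 * (-2 / 3) : ℝ) = 4 by norm_num] at this
  have hsq : L ^ (-(4 : ℝ) / 3) = lam ^ 2 := by
    rw [← rpow_mul_natCast hL.le]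
    norm_num
  have hinv : L⁻¹ = lam * √lam := by
    rw [sqrt_eq_rpow, ← rpow_mul hL.le, ← rpow_add hL, ← rpow_neg_one]
    norm_num
  rw [hsq, hinv]
  calc 2 * R * lam ^ 2 * (∫ b in (0 : ℝ)..1, g b) - 2 * C * R * (lam * √lam)
      = 2 * R * (lam ^ 2 * (∫ b in (0 : ℝ)..1, g b) - C * (lam * √lam)) := by ring
    _ ≤ ∫ x in Strip R ∩ {x : ℝ × ℝ | A ≤ |x.2|}, stripDensity L u x :=
      hstrip hg hu hu₁ hA hlam hR hui

/-- The key lower-bound lemma away from the zero set of the field. -/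
theorem lemma_lower_bound (M : ℝ) (hM : 0 < M) (g : ℝ → ℝ) (hg : IsLimitG g) :
    ∃ C > (0:ℝ), ∃ A₀ : ℝ, A₀ ≥ 4 ∧ ∀ A ≥ A₀, ∀ R ≥ (1:ℝ), ∀ L : ℝ, 0 < L →
      L ≤ A ^ (-(3:ℝ)/2) → ∀ u : ℝ × ℝ → ℂ, ContDiff ℝ 1 u → (∀ x, ‖u x‖ ≤ 1) →
      (∫ x in Strip R, ‖u x‖ ^ 2) ≤ M * L ^ (-(2:ℝ)/3) * R →
      (∫ x in Strip R ∩ {x : ℝ × ℝ | A ≤ |x.2|}, stripDensity L u x) ≥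
        2 * R * L ^ (-(4:ℝ)/3) * (∫ b in (0:ℝ)..1, g b) - C * R * L⁻¹ := by
  obtain ⟨C, hC, hbound⟩ := lemma_lower_bound_general
  refine ⟨C, hC, 4, le_rfl, fun A hA R hR L hL hLA u hu hu₁ _ => ?_⟩
  by_cases hui : IntegrableOn (stripDensity L u) (Strip R ∩ {x : ℝ × ℝ | A ≤ |x.2|})
  · have hL₈ : L ≤ 1 / 8 := calc
      L ≤ A ^ (-(3 : ℝ) / 2) := hLA
      _ ≤ 4 ^ (-(3 : ℝ) / 2) := rpow_le_rpow_of_nonpos (by norm_num) hA (by norm_num)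
      _ = (2 ^ (2 : ℝ)) ^ (-(3 : ℝ) / 2) := by norm_num
      _ = 1 / 8 := by rw [← rpow_mul (by norm_num)]; norm_num
    exact hbound g hg A (by linarith) R hR L hL hL₈ u hu hu₁ hui
  · rw [integral_undef hui]
    have hmain : 2 * R * L ^ (-(4 : ℝ) / 3) * (∫ b in (0 : ℝ)..1, g b) ≤ 0 :=
      mul_nonpos_of_nonneg_of_nonpos (by positivity) hg.integral_nonpos
    have : 0 ≤ C * R * L⁻¹ := by positivity
    linarith

end
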